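/- arXiv:1807.06952 — 5 statements merged into one kernel-verified Lean document; each statement's English description precedes it below -/
import Mathlib

section
/- Let μ = e^{−V(x)} dx be a log-concave measure on ℝⁿ with V convex and C², and let K be a convex body such that ∫_K ∂V/∂xᵢ dμ = 0 for all i = 1,…,n. Then ∫_K |∇V|² dμ ≤ ∫_K ΔV dμ. -/
open MeasureTheory

section PrekopaLeindler
open scoped ENNReal Pointwise

lemma pl_inner {A : Set ℝ} (hA : MeasurableSet A) (hne : A.Nonempty) (c d : ℝ≥0∞)
    (h : ∀ K ⊆ A, IsCompact K → K.Nonempty → volume K + c ≤ d) : volume A + c ≤ d := by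
  obtain ⟨a, ha⟩ := hne
  have hc : c ≤ d := by
    simpa using h {a} (by simpa using ha) isCompact_singleton (Set.singleton_nonempty a)
  by_cases hcd : c = ∞
  · subst hcd; simpa using hc
  · have : volume A ≤ d - c := by
      rw [hA.measure_eq_iSup_isCompact]
      refine iSup_le fun K => iSup_le fun hK => iSup_le fun hKc => ?_
      rcases K.eq_empty_or_nonempty with rfl | hn
      · simp
      · exact ENNReal.le_sub_of_add_le_right hcd (h K hK hKc hn)
    calc volume A + c ≤ (d - c) + c := by gcongr
      _ = d := tsub_add_cancel_of_le hc

lemma pl_half (A : Set ℝ) (b : ℝ) :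
    2 * volume ((fun x : ℝ => (1/2 : ℝ) • (x + b)) '' A) = volume A := by
  have : (fun x : ℝ => (1/2 : ℝ) • (x + b)) '' A
      = (1/2 : ℝ) • ((fun x => x + b) '' A) := by
    rw [← Set.image_smul, Set.image_image]
  rw [this, Measure.addHaar_smul]
  have h2 : volume ((fun x => x + b) '' A) = volume A := by
    rw [Set.image_add_right, measure_preimage_add_right]
  rw [h2, ← mul_assoc]
  have : (2:ℝ≥0∞) * ENNReal.ofReal |(1/2:ℝ) ^ Module.finrank ℝ ℝ| = 1 := by
    rw [← ENNReal.ofReal_ofNat, ← ENNReal.ofReal_mul (by norm_num)]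
    simp
  rw [this, one_mul]

lemma pl_bm_compact {A B C : Set ℝ} (hA : IsCompact A) (hB : IsCompact B)
    (hAn : A.Nonempty) (hBn : B.Nonempty)
    (h : ∀ x ∈ A, ∀ y ∈ B, (1/2 : ℝ) • (x + y) ∈ C) : volume A + volume B ≤ 2 * volume C := by
  obtain ⟨a, haA, ha⟩ := hA.exists_isGreatest hAn
  obtain ⟨b, hbB, hb⟩ := hB.exists_isLeast hBn
  set S := (fun x : ℝ => (1/2 : ℝ) • (x + b)) '' A with hS
  set T := (fun x : ℝ => (1/2 : ℝ) • (x + a)) '' B with hT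
  have hSm : MeasurableSet T := (hB.image (by fun_prop)).measurableSet
  have hd : AEDisjoint volume S T := by
    refine measure_mono_null (t := {(1/2:ℝ) • (a+b)}) ?_ (by simp)
    rintro _ ⟨⟨x, hx, rfl⟩, ⟨y, hy, hxy⟩⟩
    have h1 := ha hx
    have h2 := hb hy
    simp only [smul_eq_mul, Set.mem_singleton_iff] at hxy ⊢
    linarith
  rw [← pl_half A b, ← pl_half B a, ← mul_add, ← measure_union₀ hSm.nullMeasurableSet hd]
  gcongr
  rintro _ (⟨x, hx, rfl⟩ | ⟨y, hy, rfl⟩)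
  · exact h x hx b hbB
  · simpa [add_comm] using h a haA y hy

lemma pl_bm {A B C : Set ℝ} (hA : MeasurableSet A) (hB : MeasurableSet B)
    (hAn : A.Nonempty) (hBn : B.Nonempty)
    (h : ∀ x ∈ A, ∀ y ∈ B, (1/2 : ℝ) • (x + y) ∈ C) : volume A + volume B ≤ 2 * volume C := by
  refine pl_inner hA hAn _ _ fun K hK hKc hKn => ?_
  rw [add_comm]
  refine pl_inner hB hBn _ _ fun L hL hLc hLn => ?_
  rw [add_comm]
  exact pl_bm_compact hKc hLc hKn hLn fun x hx y hy => h x (hK hx) y (hL hy)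

lemma pl_layer {f : ℝ → ℝ≥0∞} (hf : Measurable f) (h1 : ∀ x, f x ≤ 1) :
    ∫⁻ x, f x = ∫⁻ t in Set.Ioo (0:ℝ) 1, volume {x | ENNReal.ofReal t < f x} := by
  have e : ∀ x, f x = ENNReal.ofReal (f x).toReal := fun x =>
    (ENNReal.ofReal_toReal ((h1 x).trans_lt ENNReal.one_lt_top).ne).symm
  have e2 : ∀ t : ℝ, 0 < t → {x | ENNReal.ofReal t < f x} = {x | t < (f x).toReal} := by
    intro t ht
    ext x
    exact ENNReal.ofReal_lt_iff_lt_toReal ht.le ((h1 x).trans_lt ENNReal.one_lt_top).ne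
  calc ∫⁻ x, f x = ∫⁻ x, ENNReal.ofReal (f x).toReal := lintegral_congr e
    _ = ∫⁻ t in Set.Ioi (0:ℝ), volume {x | t < (f x).toReal} :=
        lintegral_eq_lintegral_meas_lt _ (Filter.Eventually.of_forall fun x => ENNReal.toReal_nonneg)
          hf.ennreal_toReal.aemeasurable
    _ = ∫⁻ t in Set.Ioo (0:ℝ) 1, volume {x | t < (f x).toReal} := by
        symm
        rw [← lintegral_indicator measurableSet_Ioi, ← lintegral_indicator measurableSet_Ioo]
        refine lintegral_congr fun t => ?_
        by_cases ht0 : t ∈ Set.Ioi (0:ℝ)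
        swap
        · rw [Set.indicator_of_notMem ht0, Set.indicator_of_notMem fun hh => ht0 hh.1]
        by_cases ht1 : t ∈ Set.Ioo (0:ℝ) 1
        · rw [Set.indicator_of_mem ht0, Set.indicator_of_mem ht1]
        rw [Set.indicator_of_mem ht0, Set.indicator_of_notMem ht1]
        have : 1 ≤ t := by
          by_contra hh
          exact ht1 ⟨ht0, not_le.1 hh⟩
        have : {x | t < (f x).toReal} = ∅ := by
          ext x
          simp only [Set.mem_ofPred_eq, Set.mem_empty_iff_false, iff_false, not_lt]
          exact (ENNReal.toReal_mono ENNReal.one_ne_top (h1 x)).trans (by simpa using this)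
        simp [this]
    _ = _ := setLIntegral_congr_fun measurableSet_Ioo fun t ht => by
        simp only [e2 t ht.1]

lemma pl_amgm (p q r : ℝ≥0∞) (h : p + q ≤ 2 * r) : p * q ≤ r ^ 2 := by
  by_cases hr : r = ∞
  · simp [hr]
  have hs : 2 * r ≠ ∞ := ENNReal.mul_ne_top (by simp) hr
  have hp : p ≠ ∞ := ne_top_of_le_ne_top hs (le_self_add.trans h)
  have hq : q ≠ ∞ := ne_top_of_le_ne_top hs (le_add_self.trans h)
  lift p to NNReal using hp
  lift q to NNReal using hq
  lift r to NNReal using hr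
  norm_cast at h ⊢
  have h' : (p:ℝ) + q ≤ 2 * r := by exact_mod_cast h
  have : (p:ℝ) * q ≤ r ^ 2 := by
    have h3 : ((p:ℝ) + q)^2 ≤ (2*r)^2 := by gcongr
    nlinarith [sq_nonneg ((p:ℝ) - q)]
  exact_mod_cast this

lemma pl_norm {f g h : ℝ → ℝ≥0∞} (hf : Measurable f) (hg : Measurable g) (hh : Measurable h)
    (hf1 : ⨆ x, f x = 1) (hg1 : ⨆ x, g x = 1)
    (H : ∀ x y, f x * g y ≤ h ((1/2 : ℝ) • (x + y)) ^ 2) :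
    (∫⁻ x, f x) * (∫⁻ x, g x) ≤ (∫⁻ x, h x) ^ 2 := by
  apply pl_amgm
  have hf' : ∀ x, f x ≤ 1 := fun x => hf1 ▸ le_iSup f x
  have hg' : ∀ x, g x ≤ 1 := fun x => hg1 ▸ le_iSup g x
  have hm : ∫⁻ x, min (h x) 1 ≤ ∫⁻ x, h x := lintegral_mono fun x => min_le_left _ _
  refine le_trans ?_ (mul_le_mul_right hm 2)
  rw [pl_layer hf hf', pl_layer hg hg', pl_layer (hh.min measurable_const) fun x => min_le_right _ _]
  have hanti : ∀ u : ℝ → ℝ≥0∞, Measurable fun t : ℝ => volume {x | ENNReal.ofReal t < u x} := by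
    intro u
    refine Antitone.measurable fun s t hst => measure_mono fun x hx => ?_
    exact lt_of_le_of_lt (ENNReal.ofReal_le_ofReal hst) hx
  rw [← lintegral_add_left (hanti f), ← lintegral_const_mul _ (hanti _)]
  refine setLIntegral_mono' measurableSet_Ioo fun t ht => ?_
  have ht1 : ENNReal.ofReal t < 1 := by simpa using ht.2
  refine pl_bm (measurableSet_lt measurable_const hf) (measurableSet_lt measurable_const hg)
    ?_ ?_ ?_
  · rw [← hf1] at ht1; exact lt_iSup_iff.1 ht1
  · rw [← hg1] at ht1; exact lt_iSup_iff.1 ht1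
  · intro x hx y hy
    simp only [Set.mem_ofPred_eq] at hx hy ⊢
    refine lt_min ?_ ht1
    by_contra hcon
    have h1 : h ((1/2 : ℝ) • (x + y)) ^ 2 ≤ ENNReal.ofReal t ^ 2 :=
      pow_le_pow_left' (not_lt.1 hcon) 2
    have h2 : ENNReal.ofReal t ^ 2 < f x * g y := by
      rw [sq]; exact ENNReal.mul_lt_mul hx hy
    exact absurd ((H x y).trans h1) (not_le.2 h2)

lemma pl_bdd {f g h : ℝ → ℝ≥0∞} (hf : Measurable f) (hg : Measurable g) (hh : Measurable h)
    (N : ℝ≥0∞) (hN : N ≠ ∞) (hfN : ∀ x, f x ≤ N) (hgN : ∀ x, g x ≤ N)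
    (H : ∀ x y, f x * g y ≤ h ((1/2 : ℝ) • (x + y)) ^ 2) :
    (∫⁻ x, f x) * (∫⁻ x, g x) ≤ (∫⁻ x, h x) ^ 2 := by
  set a := ⨆ x, f x with ha
  set b := ⨆ x, g x with hb
  have hat : a ≠ ∞ := ne_top_of_le_ne_top hN (iSup_le hfN)
  have hbt : b ≠ ∞ := ne_top_of_le_ne_top hN (iSup_le hgN)
  by_cases ha0 : a = 0
  · have : ∀ x, f x = 0 := by simpa [ha] using ha0
    simp [this]
  by_cases hb0 : b = 0
  · have : ∀ x, g x = 0 := by simpa [hb] using hb0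
    simp [this]
  set c := (a * b) ^ (1/2 : ℝ) with hc
  have hc2 : c ^ 2 = a * b := by
    rw [hc, ← ENNReal.rpow_natCast, ← ENNReal.rpow_mul]; norm_num
  have hinv : (c⁻¹)^2 = a⁻¹ * b⁻¹ := by
    rw [← ENNReal.inv_pow, hc2, ENNReal.mul_inv (Or.inl ha0) (Or.inl hat)]
  have key := pl_norm (f := fun x => a⁻¹ * f x) (g := fun x => b⁻¹ * g x)
    (h := fun x => c⁻¹ * h x) (hf.const_mul _) (hg.const_mul _) (hh.const_mul _)
    (by rw [← ENNReal.mul_iSup]; exact ENNReal.inv_mul_cancel ha0 hat)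
    (by rw [← ENNReal.mul_iSup]; exact ENNReal.inv_mul_cancel hb0 hbt)
    (fun x y => by
      rw [mul_pow, hinv, mul_mul_mul_comm]
      gcongr; exact H x y)
  rw [lintegral_const_mul _ hf, lintegral_const_mul _ hg, lintegral_const_mul _ hh, mul_pow, hinv,
    mul_mul_mul_comm] at key
  refine (ENNReal.mul_le_mul_iff_right ?_ ?_).1 key
  · exact mul_ne_zero (ENNReal.inv_ne_zero.2 hat) (ENNReal.inv_ne_zero.2 hbt)
  · exact ENNReal.mul_ne_top (ENNReal.inv_ne_top.2 ha0) (ENNReal.inv_ne_top.2 hb0)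

lemma pl_trunc {f : ℝ → ℝ≥0∞} (hf : Measurable f) :
    ∫⁻ x, f x = ⨆ n : ℕ, ∫⁻ x, min (f x) n := by
  rw [← lintegral_iSup (fun n => hf.min measurable_const)]
  · refine lintegral_congr fun x => ?_
    have := ENNReal.iSup_natCast
    rw [← inf_iSup_eq, this]; simp
  · intro m n hmn x
    exact min_le_min_left _ (by exact_mod_cast hmn)

lemma pl_one {f g h : ℝ → ℝ≥0∞} (hf : Measurable f) (hg : Measurable g) (hh : Measurable h)
    (H : ∀ x y, f x * g y ≤ h ((1/2 : ℝ) • (x + y)) ^ 2) :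
    (∫⁻ x, f x) * (∫⁻ x, g x) ≤ (∫⁻ x, h x) ^ 2 := by
  rw [pl_trunc hf, pl_trunc hg, ENNReal.iSup_mul]
  refine iSup_le fun m => ?_
  rw [ENNReal.mul_iSup]
  refine iSup_le fun n => ?_
  refine pl_bdd (hf.min measurable_const) (hg.min measurable_const) hh (max m n : ℕ) (by simp)
    (fun x => (min_le_right _ _).trans (by simp)) (fun x => (min_le_right _ _).trans (by simp)) ?_
  intro x y
  exact (mul_le_mul' (min_le_left _ _) (min_le_left _ _)).trans (H x y)

lemma pl_fubini (n : ℕ) {f : (Fin (n+1) → ℝ) → ℝ≥0∞} (hf : Measurable f) :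
    ∫⁻ x, f x = ∫⁻ t : ℝ, ∫⁻ x : Fin n → ℝ,
      f ((MeasurableEquiv.piFinSuccAbove (fun _ => ℝ) 0).symm (t, x)) := by
  have e := (volume_preserving_piFinSuccAbove (fun _ : Fin (n+1) => ℝ) 0).symm
  rw [← e.lintegral_comp hf]
  exact lintegral_prod _ (hf.comp (MeasurableEquiv.measurable _)).aemeasurable

theorem pl_main (n : ℕ) : ∀ {f g h : (Fin n → ℝ) → ℝ≥0∞}, Measurable f → Measurable g →
    Measurable h → (∀ x y, f x * g y ≤ h ((1/2 : ℝ) • (x + y)) ^ 2) →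
    (∫⁻ x, f x) * (∫⁻ x, g x) ≤ (∫⁻ x, h x) ^ 2 := by
  induction n with
  | zero =>
    intro f g h hf hg hh H
    have hv : (volume : Measure (Fin 0 → ℝ)) Set.univ = 1 := by
      rw [volume_pi, Measure.pi_univ]; simp
    rw [lintegral_unique, lintegral_unique, lintegral_unique, hv]
    simp only [mul_one]
    convert H default default using 3
  | succ n ih =>
    intro f g h hf hg hh H
    rw [pl_fubini n hf, pl_fubini n hg, pl_fubini n hh]
    have hm : ∀ {u : (Fin (n+1) → ℝ) → ℝ≥0∞}, Measurable u → Measurable fun p : ℝ × (Fin n → ℝ) =>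
        u ((MeasurableEquiv.piFinSuccAbove (fun _ => ℝ) 0).symm p) :=
      fun hu => hu.comp (MeasurableEquiv.measurable _)
    refine pl_one (hm hf).lintegral_prod_right' (hm hg).lintegral_prod_right'
      (hm hh).lintegral_prod_right' ?_
    intro s t
    refine ih ((hm hf).comp measurable_prodMk_left) ((hm hg).comp measurable_prodMk_left)
      ((hm hh).comp measurable_prodMk_left) ?_
    intro x y
    refine (H _ _).trans (le_of_eq ?_)
    congr 2
    ext i
    refine Fin.cases ?_ (fun j => ?_) i
    · simp [MeasurableEquiv.piFinSuccAbove]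
    · simp [MeasurableEquiv.piFinSuccAbove, mul_add]

end PrekopaLeindler

lemma par_deriv {n : ℕ} {K : Set (Fin n → ℝ)} (hKc : IsCompact K)
    {F F' : ℝ → (Fin n → ℝ) → ℝ} (hF : Continuous (Function.uncurry F))
    (hF' : Continuous (Function.uncurry F'))
    (hd : ∀ t x, HasDerivAt (fun s => F s x) (F' t x) t) (t₀ : ℝ) :
    HasDerivAt (fun t => ∫ x in K, F t x) (∫ x in K, F' t₀ x) t₀ := by
  obtain ⟨C, hC⟩ := ((isCompact_closedBall t₀ 1).prod hKc).exists_bound_of_continuousOn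
    hF'.continuousOn
  have c1 : ∀ t, Continuous (F t) := fun t => hF.comp (Continuous.prodMk_right t)
  have c2 : ∀ t, Continuous (F' t) := fun t => hF'.comp (Continuous.prodMk_right t)
  have : IsFiniteMeasure (volume.restrict K) := ⟨by
    rw [Measure.restrict_apply_univ]; exact hKc.measure_lt_top⟩
  refine (hasDerivAt_integral_of_dominated_loc_of_deriv_le (bound := fun _ => C)
    (Metric.closedBall_mem_nhds t₀ one_pos)
    (Filter.Eventually.of_forall fun t => (c1 t).aestronglyMeasurable)
    ((c1 t₀).continuousOn.integrableOn_compact hKc) (c2 t₀).aestronglyMeasurable ?_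
    (integrable_const C) (Filter.Eventually.of_forall fun x t _ => hd t x)).2
  filter_upwards [ae_restrict_mem hKc.measurableSet] with x hx t ht
  exact hC (t, x) ⟨ht, hx⟩

theorem pl_conv (n : ℕ) {V : (Fin n → ℝ) → ℝ}
    (hVconv : ConvexOn ℝ Set.univ V) (hV : Continuous V)
    {K : Set (Fin n → ℝ)} (hKconv : Convex ℝ K) (hKc : IsCompact K) (v : Fin n → ℝ) :
    (∫ x in K, Real.exp (-V (x + v))) * (∫ x in K, Real.exp (-V (x - v)))
      ≤ (∫ x in K, Real.exp (-V x)) ^ 2 := by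
  have conv : ∀ u : (Fin n → ℝ) → (Fin n → ℝ), Continuous u →
      ∫⁻ x, K.indicator (fun x => ENNReal.ofReal (Real.exp (-V (u x)))) x
        = ENNReal.ofReal (∫ x in K, Real.exp (-V (u x))) := by
    intro u hu
    rw [lintegral_indicator hKc.measurableSet, ofReal_integral_eq_lintegral_ofReal]
    · have : Continuous fun x => Real.exp (-V (u x)) := by fun_prop
      exact this.continuousOn.integrableOn_compact hKc
    · exact Filter.Eventually.of_forall fun x => (Real.exp_pos _).le
  have meas : ∀ u : (Fin n → ℝ) → (Fin n → ℝ), Continuous u →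
      Measurable (K.indicator (fun x => ENNReal.ofReal (Real.exp (-V (u x))))) := by
    intro u hu
    have : Continuous fun x => Real.exp (-V (u x)) := by fun_prop
    exact this.measurable.ennreal_ofReal.indicator hKc.measurableSet
  have nn : ∀ u : (Fin n → ℝ) → (Fin n → ℝ), 0 ≤ ∫ x in K, Real.exp (-V (u x)) := fun u =>
    integral_nonneg fun x => (Real.exp_pos _).le
  have c1 : Continuous fun x : Fin n → ℝ => x + v := by fun_prop
  have c2 : Continuous fun x : Fin n → ℝ => x - v := by fun_prop
  have c3 : Continuous fun x : Fin n → ℝ => x := by fun_prop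
  have main := pl_main n (meas _ c1) (meas _ c2) (meas _ c3) (by
    intro x y
    by_cases hx : x ∈ K
    swap
    · simp [hx]
    by_cases hy : y ∈ K
    swap
    · simp [hy]
    have hxy : (1/2 : ℝ) • (x + y) ∈ K := by
      rw [smul_add]
      exact hKconv hx hy (by norm_num) (by norm_num) (by norm_num)
    rw [Set.indicator_of_mem hx, Set.indicator_of_mem hy, Set.indicator_of_mem hxy,
      ← ENNReal.ofReal_mul (Real.exp_pos _).le, ← ENNReal.ofReal_pow (Real.exp_pos _).le,
      ← Real.exp_add, ← Real.exp_nat_mul]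
    refine ENNReal.ofReal_le_ofReal (Real.exp_le_exp.2 ?_)
    have h := hVconv.2 (Set.mem_univ (x + v)) (Set.mem_univ (y - v))
      (show (0:ℝ) ≤ 1/2 by norm_num) (show (0:ℝ) ≤ 1/2 by norm_num) (by norm_num)
    have he : (1/2 : ℝ) • (x + v) + (1/2 : ℝ) • (y - v) = (1/2 : ℝ) • (x + y) := by module
    rw [he] at h
    simp only [smul_eq_mul] at h
    push_cast
    linarith)
  rw [conv _ c1, conv _ c2, conv _ c3, ← ENNReal.ofReal_mul (nn _), ← ENNReal.ofReal_pow (nn _)]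
    at main
  exact (ENNReal.ofReal_le_ofReal_iff (by positivity)).1 main

/-- For a log-concave measure `μ = e^{-V} dx` with `V` convex and `C²`, and a convex body
`K` with `∫_K ∂V/∂xᵢ dμ = 0` for all `i`, one has `∫_K |∇V|² dμ ≤ ∫_K ΔV dμ`. -/
theorem stmt_6 (n : ℕ) (V : (Fin n → ℝ) → ℝ)
    (hVconv : ConvexOn ℝ Set.univ V) (hV : ContDiff ℝ 2 V)
    (K : Set (Fin n → ℝ)) (hKconv : Convex ℝ K) (hKc : IsCompact K)
    (hKint : (interior K).Nonempty)
    (hbary : ∀ i : Fin n,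
      ∫ x in K, fderiv ℝ V x (Pi.single i 1) * Real.exp (-V x) = 0) :
    ∫ x in K, (∑ i, (fderiv ℝ V x (Pi.single i 1)) ^ 2) * Real.exp (-V x)
      ≤ ∫ x in K,
          (∑ i, fderiv ℝ (fun y => fderiv ℝ V y (Pi.single i 1)) x (Pi.single i 1))
            * Real.exp (-V x) := by
  have hV0 : Continuous V := hV.continuous
  have hV1 : ∀ i : Fin n, ContDiff ℝ 1 fun x => fderiv ℝ V x (Pi.single i 1) := fun i =>
    (hV.fderiv_right (by norm_num)).clm_apply contDiff_const
  have hV1c := fun i => (hV1 i).continuous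
  have hV2c : ∀ i : Fin n, Continuous fun x =>
      fderiv ℝ (fun y => fderiv ℝ V y (Pi.single i 1)) x (Pi.single i 1) := fun i =>
    ((hV1 i).continuous_fderiv (by norm_num)).clm_apply continuous_const
  have key : ∀ i : Fin n, ∫ x in K, (fderiv ℝ V x (Pi.single i 1)) ^ 2 * Real.exp (-V x)
      ≤ ∫ x in K, fderiv ℝ (fun y => fderiv ℝ V y (Pi.single i 1)) x (Pi.single i 1)
            * Real.exp (-V x) := by
    intro i
    set e : Fin n → ℝ := Pi.single i 1 with he
    set D : (Fin n → ℝ) → ℝ := fun y => fderiv ℝ V y e with hD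
    set D2 : (Fin n → ℝ) → ℝ := fun y => fderiv ℝ D y e with hD2
    have cD : Continuous D := hV1c i
    have cD2 : Continuous D2 := hV2c i
    have hline : ∀ (x : Fin n → ℝ) (t : ℝ), HasDerivAt (fun s : ℝ => x + s • e) e t := fun x t => by
      simpa using ((hasDerivAt_id t).smul_const e).const_add x
    have dV : ∀ t x, HasDerivAt (fun s : ℝ => V (x + s • e)) (D (x + t • e)) t := fun t x =>
      ((hV.differentiable (by norm_num)) _).hasFDerivAt.comp_hasDerivAt t (hline x t)
    have dD : ∀ t x, HasDerivAt (fun s : ℝ => D (x + s • e)) (D2 (x + t • e)) t := fun t x =>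
      (((hV1 i).differentiable (by norm_num)) _).hasFDerivAt.comp_hasDerivAt t (hline x t)
    let F : ℝ → (Fin n → ℝ) → ℝ := fun t x => Real.exp (-V (x + t • e))
    let F1 : ℝ → (Fin n → ℝ) → ℝ := fun t x => - D (x + t • e) * Real.exp (-V (x + t • e))
    let F2 : ℝ → (Fin n → ℝ) → ℝ := fun t x =>
      ((D (x + t • e)) ^ 2 - D2 (x + t • e)) * Real.exp (-V (x + t • e))
    have cF : Continuous (Function.uncurry F) := by
      simp only [F, Function.uncurry_def]; fun_prop
    have cF1 : Continuous (Function.uncurry F1) := by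
      simp only [F1, Function.uncurry_def]; fun_prop
    have cF2 : Continuous (Function.uncurry F2) := by
      simp only [F2, Function.uncurry_def]; fun_prop
    have dF : ∀ t x, HasDerivAt (fun s => F s x) (F1 t x) t := fun t x =>
      ((dV t x).neg.exp).congr_deriv (by simp only [F1, Pi.neg_apply]; ring)
    have dF1 : ∀ t x, HasDerivAt (fun s => F1 s x) (F2 t x) t := fun t x =>
      ((dD t x).neg.mul (dF t x)).congr_deriv (by simp only [F1, F2, F, Pi.neg_apply]; ring)
    set φ : ℝ → ℝ := fun t => ∫ x in K, F t x with hφ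
    have dφ : ∀ t, HasDerivAt φ (∫ x in K, F1 t x) t := par_deriv hKc cF cF1 dF
    have eφ : deriv φ = fun t => ∫ x in K, F1 t x := funext fun t => (dφ t).deriv
    have ddφ : deriv (deriv φ) 0 = ∫ x in K, F2 0 x := by
      rw [eφ]; exact (par_deriv hKc cF1 cF2 dF1 0).deriv
    have φ1 : deriv φ 0 = 0 := by
      rw [eφ]
      simp only [F1, zero_smul, add_zero, neg_mul]
      rw [integral_neg, hbary i, neg_zero]
    have hint : ∀ {u : (Fin n → ℝ) → ℝ}, Continuous u → IntegrableOn u K := fun hu =>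
      hu.continuousOn.integrableOn_compact hKc
    have hφ2 : deriv (deriv φ) 0 = (∫ x in K, D x ^ 2 * Real.exp (-V x))
        - ∫ x in K, D2 x * Real.exp (-V x) := by
      rw [ddφ, ← integral_sub (hint (by fun_prop)) (hint (by fun_prop))]
      simp only [F2, zero_smul, add_zero, sub_mul]
    by_contra hcon
    have hpos : 0 < deriv (deriv φ) 0 := by
      rw [hφ2]; exact sub_pos.2 (not_le.1 hcon)
    have hmin : IsLocalMin φ 0 :=
      isLocalMin_of_deriv_deriv_pos hpos φ1 (dφ 0).continuousAt
    have hPL : ∀ t, φ t * φ (-t) ≤ φ 0 ^ 2 := by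
      intro t
      have := pl_conv n hVconv hV0 hKconv hKc (t • e)
      simpa [φ, F, sub_eq_add_neg] using this
    have hφ0 : 0 < φ 0 := by
      have hvol : 0 < volume K := (Measure.measure_pos_of_nonempty_interior volume hKint)
      have hne : NeZero (volume.restrict K) := ⟨by
        rw [Ne, Measure.restrict_eq_zero]; exact hvol.ne'⟩
      have : Integrable (fun x => Real.exp (-V x)) (volume.restrict K) := hint (by fun_prop)
      simpa [φ, F] using integral_exp_pos this
    have hmin' : ∀ᶠ t in nhds (0:ℝ), φ 0 ≤ φ (-t) := by
      have : Filter.Tendsto (fun t : ℝ => -t) (nhds 0) (nhds 0) := by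
        simpa using (continuous_neg.tendsto (0:ℝ))
      exact this.eventually hmin
    have hconst : φ =ᶠ[nhds 0] fun _ => φ 0 := by
      filter_upwards [hmin, hmin'] with t h1 h2
      have h3 := hPL t
      nlinarith
    have : deriv (deriv φ) 0 = 0 := by
      rw [hconst.deriv.deriv_eq]; simp
    linarith
  have hint : ∀ {u : (Fin n → ℝ) → ℝ}, Continuous u → IntegrableOn u K := fun hu =>
    hu.continuousOn.integrableOn_compact hKc
  simp only [Finset.sum_mul]
  rw [integral_finsetSum _ fun i _ => hint (by have := hV1c i; fun_prop),
    integral_finsetSum _ fun i _ => hint (by have := hV2c i; fun_prop)]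
  exact Finset.sum_le_sum fun i _ => key i
end

section
/- For the standard Gaussian measure γ on ℝⁿ and every convex body K containing the origin, (1/γ(K)) ∫_K 1/(|x|²/n + 1) dγ(x) ≥ 1/2. -/
open MeasureTheory

/-- The density of the standard Gaussian measure. -/
noncomputable def gdens (n : ℕ) (x : Fin n → ℝ) : ℝ :=
  ((√(2 * Real.pi))⁻¹) ^ n * Real.exp (-(∑ i, x i ^ 2) / 2)

lemma gdens_pos (n : ℕ) (x : Fin n → ℝ) : 0 < gdens n x := by
  unfold gdens; positivity

lemma gdens_cont (n : ℕ) : Continuous (gdens n) := by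
  unfold gdens; fun_prop

lemma gdens_eq (n : ℕ) (x : Fin n → ℝ) :
    gdens n x = ∏ i, ProbabilityTheory.gaussianPDFReal 0 1 (x i) := by
  simp only [gdens, ProbabilityTheory.gaussianPDFReal, Finset.prod_mul_distrib, ← Real.exp_sum]
  simp [Finset.sum_div, Finset.sum_neg_distrib, neg_div]

lemma pi_gauss (n : ℕ) :
    (Measure.pi fun _ : Fin n => ProbabilityTheory.gaussianReal 0 1) =
      (volume : Measure (Fin n → ℝ)).withDensity fun x => ENNReal.ofReal (gdens n x) := by
  refine Measure.pi_eq fun s hs => ?_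
  rw [withDensity_apply _ (MeasurableSet.univ_pi hs), volume_pi, Measure.restrict_pi_pi]
  simp only [ProbabilityTheory.gaussianReal_apply_eq_integral 0 one_ne_zero]
  rw [← ENNReal.ofReal_prod_of_nonneg
    (fun i _ => integral_nonneg fun x => ProbabilityTheory.gaussianPDFReal_nonneg _ _ _),
    ← integral_fintype_prod_eq_prod (fun (_ : Fin n) x => ProbabilityTheory.gaussianPDFReal 0 1 x),
    ofReal_integral_eq_lintegral_ofReal]
  · simp only [gdens_eq]
  · exact Integrable.fintype_prod fun i =>
      (ProbabilityTheory.integrable_gaussianPDFReal 0 1).restrict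
  · exact Filter.Eventually.of_forall fun x =>
      Finset.prod_nonneg fun i _ => ProbabilityTheory.gaussianPDFReal_nonneg _ _ _

open scoped Pointwise in
lemma moment_s (n : ℕ) (K : Set (Fin n → ℝ))
    (hKconv : Convex ℝ K) (hKc : IsCompact K) (h0 : (0 : Fin n → ℝ) ∈ K)
    (s : ℝ) (hs0 : 0 < s) (hs1 : s < 1) :
    s ^ n * ((1 + s) / 2) * ∫ x in K, (∑ i, x i ^ 2) * gdens n x ≤
      n * ∫ x in K, gdens n x := by
  have hI : ∀ f : (Fin n → ℝ) → ℝ, Continuous f → IntegrableOn f K := fun f hf =>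
    hf.continuousOn.integrableOn_compact hKc
  have hc := gdens_cont n
  have h1 : ∫ x in K, gdens n (s • x) = (s ^ n)⁻¹ * ∫ x in s • K, gdens n x := by
    simpa using Measure.setIntegral_comp_smul_of_pos volume (gdens n) K hs0
  have hsub : s • K ⊆ K := by
    rintro _ ⟨x, hx, rfl⟩
    exact hKconv.smul_mem_of_zero_mem h0 hx ⟨hs0.le, hs1.le⟩
  have h2 : ∫ x in s • K, gdens n x ≤ ∫ x in K, gdens n x :=
    setIntegral_mono_set (hI _ hc) (Filter.Eventually.of_forall fun x => (gdens_pos n x).le)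
      (Filter.Eventually.of_forall hsub)
  have h3 : ∫ x in K, (gdens n x + (1 - s ^ 2) / 2 * ((∑ i, x i ^ 2) * gdens n x)) ≤
      ∫ x in K, gdens n (s • x) := by
    refine setIntegral_mono (hI _ (by fun_prop)) (hI _ (by fun_prop)) fun x => ?_
    have e : gdens n (s • x) = gdens n x * Real.exp ((1 - s ^ 2) / 2 * ∑ i, x i ^ 2) := by
      simp only [gdens, Pi.smul_apply, smul_eq_mul, mul_pow, ← Finset.mul_sum]
      rw [mul_assoc, ← Real.exp_add]
      congr 2; ring
    have := mul_le_mul_of_nonneg_left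
      (Real.add_one_le_exp ((1 - s ^ 2) / 2 * ∑ i, x i ^ 2)) (gdens_pos n x).le
    simp only [e]
    linarith
  rw [integral_add (hI _ hc) (hI _ (by fun_prop)), integral_const_mul] at h3
  have hM : 0 ≤ ∫ x in K, gdens n x := integral_nonneg fun x => (gdens_pos n x).le
  set M := ∫ x in K, gdens n x
  set A := ∫ x in K, (∑ i, x i ^ 2) * gdens n x
  have hp : 0 < s ^ n := by positivity
  have h4 : s ^ n * (M + (1 - s ^ 2) / 2 * A) ≤ M := by
    calc _ ≤ s ^ n * ((s ^ n)⁻¹ * ∫ x in s • K, gdens n x) := by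
          rw [← h1]; gcongr
      _ = ∫ x in s • K, gdens n x := by field_simp
      _ ≤ M := h2
  have hb : 1 - n * (1 - s) ≤ s ^ n := by
    have := one_add_mul_le_pow (a := s - 1) (by linarith) n
    simp only [add_sub_cancel] at this
    linarith
  have h5 : (1 - s) * (s ^ n * ((1 + s) / 2) * A) ≤ (1 - s) * (n * M) := by
    nlinarith [mul_le_mul_of_nonneg_right hb hM]
  exact le_of_mul_le_mul_left h5 (by linarith)

lemma moment (n : ℕ) (K : Set (Fin n → ℝ))
    (hKconv : Convex ℝ K) (hKc : IsCompact K) (h0 : (0 : Fin n → ℝ) ∈ K) :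
    ∫ x in K, (∑ i, x i ^ 2) * gdens n x ≤ n * ∫ x in K, gdens n x := by
  set A := ∫ x in K, (∑ i, x i ^ 2) * gdens n x with hA
  have hcont : Continuous fun s : ℝ => s ^ n * ((1 + s) / 2) * A := by fun_prop
  have ht := (hcont.tendsto 1).mono_left (nhdsWithin_le_nhds (s := Set.Iio 1))
  have := le_of_tendsto ht (b := n * ∫ x in K, gdens n x) (by
    filter_upwards [Ioo_mem_nhdsLT (show (0 : ℝ) < 1 by norm_num)] with s hs
    exact moment_s n K hKconv hKc h0 s hs.1 hs.2)
  norm_num at this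
  exact this

/-- For the standard Gaussian measure `γ` on `ℝⁿ` and every convex body `K` containing the
origin, `(1/γ(K)) ∫_K 1/(|x|²/n + 1) dγ ≥ 1/2`. -/
theorem stmt_9 (n : ℕ) (hn : 0 < n) (K : Set (Fin n → ℝ))
    (hKconv : Convex ℝ K) (hKc : IsCompact K) (hKint : (interior K).Nonempty)
    (h0 : (0 : Fin n → ℝ) ∈ K)
    (γ : Measure (Fin n → ℝ))
    (hγ : γ = Measure.pi fun _ : Fin n => ProbabilityTheory.gaussianReal 0 1) :
    (1 / 2 : ℝ) ≤ (1 / (γ K).toReal) * ∫ x in K, 1 / ((∑ i, x i ^ 2) / n + 1) ∂γ := by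
  have hI : ∀ f : (Fin n → ℝ) → ℝ, Continuous f → IntegrableOn f K := fun f hf =>
    hf.continuousOn.integrableOn_compact hKc
  have hc := gdens_cont n
  have hn' : (0 : ℝ) < n := by exact_mod_cast hn
  have hpos : ∀ x : Fin n → ℝ, 0 < (∑ i, x i ^ 2) / n + 1 := fun x => by positivity
  have hmom := moment n K hKconv hKc h0
  have hm : (γ K).toReal = ∫ x in K, gdens n x := by
    rw [hγ, pi_gauss, withDensity_apply _ hKc.measurableSet, ← ofReal_integral_eq_lintegral_ofReal
      (hI _ hc) (Filter.Eventually.of_forall fun x => (gdens_pos n x).le), ENNReal.toReal_ofReal]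
    exact integral_nonneg fun x => (gdens_pos n x).le
  have hint : ∫ x in K, 1 / ((∑ i, x i ^ 2) / n + 1) ∂γ =
      ∫ x in K, gdens n x * (1 / ((∑ i, x i ^ 2) / n + 1)) := by
    rw [hγ, pi_gauss, setIntegral_withDensity_eq_setIntegral_toReal_smul
      (by fun_prop) (Filter.Eventually.of_forall fun x => ENNReal.ofReal_lt_top) _
      hKc.measurableSet]
    simp only [ENNReal.toReal_ofReal (gdens_pos n _).le, smul_eq_mul]
  have hMpos : 0 < ∫ x in K, gdens n x := by
    rw [setIntegral_pos_iff_support_of_nonneg_ae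
      (Filter.Eventually.of_forall fun x => (gdens_pos n x).le) (hI _ hc)]
    have : Function.support (gdens n) = Set.univ := by
      ext x; simp [(gdens_pos n x).ne']
    rw [this, Set.univ_inter]
    exact Measure.measure_pos_of_nonempty_interior _ hKint
  rw [hm, hint]
  have key : ∫ x in K, (3 / 4 * gdens n x - 1 / (4 * n) * ((∑ i, x i ^ 2) * gdens n x)) ≤
      ∫ x in K, gdens n x * (1 / ((∑ i, x i ^ 2) / n + 1)) := by
    refine setIntegral_mono (hI _ (by fun_prop))
      (hI _ (hc.mul (continuous_const.div (by fun_prop) fun x => (hpos x).ne'))) fun x => ?_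
    have h1 : 3 / 4 - ((∑ i, x i ^ 2) / n) / 4 ≤ 1 / ((∑ i, x i ^ 2) / n + 1) := by
      rw [le_div_iff₀ (hpos x)]
      nlinarith [sq_nonneg ((∑ i, x i ^ 2) / n - 1)]
    calc _ = gdens n x * (3 / 4 - ((∑ i, x i ^ 2) / n) / 4) := by field_simp
      _ ≤ _ := mul_le_mul_of_nonneg_left h1 (gdens_pos n x).le
  rw [integral_sub ((hI _ hc).const_mul _) (hI _ (by fun_prop)), integral_const_mul,
    integral_const_mul] at key
  have h6 : 1 / (4 * n) * ∫ x in K, (∑ i, x i ^ 2) * gdens n x ≤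
      1 / 4 * ∫ x in K, gdens n x := by
    calc _ ≤ 1 / (4 * n) * (n * ∫ x in K, gdens n x) := by gcongr
      _ = _ := by field_simp
  rw [one_div_mul_eq_div, le_div_iff₀ hMpos]
  linarith
end

section
/- Let ψ : ℝ → ℝ be a C¹, 2π-periodic function. Then (1/2π)∫_{−π}^{π} ψ² dx − ((1/2π)∫_{−π}^{π} ψ dx)² ≤ (1/2π)∫_{−π}^{π} (ψ')² dx. -/
open Real

lemma parseval_aux (f : ℝ → ℝ) (hf : Continuous f) (hab : -π < π) :
    HasSum (fun i : ℤ => ‖fourierCoeffOn hab (fun x => (f x : ℂ)) i‖ ^ 2)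
      ((1 / (2 * π)) * ∫ x in (-π)..π, f x ^ 2) := by
  have hc : Continuous (fun x => (f x : ℂ)) := by fun_prop
  have hL : MeasureTheory.MemLp (fun x => (f x : ℂ)) 2
      (MeasureTheory.volume.restrict (Set.Ioc (-π) π)) := by
    obtain ⟨C, hC⟩ := (isCompact_Icc (a := -π) (b := π)).exists_bound_of_continuousOn
      hc.continuousOn
    refine MeasureTheory.MemLp.of_bound hc.aestronglyMeasurable C ?_
    refine (MeasureTheory.ae_restrict_iff' measurableSet_Ioc).2 (Filter.Eventually.of_forall ?_)
    exact fun x hx => hC x (Set.Ioc_subset_Icc_self hx)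
  have h := hasSum_sq_fourierCoeffOn (f := fun x => (f x : ℂ)) (hab := hab) hL
  convert h using 1
  simp only [Complex.norm_real, Real.norm_eq_abs, sq_abs, smul_eq_mul]
  congr 1
  rw [one_div]; congr 1; ring

/-- Wirtinger/Poincaré inequality on the circle: for `ψ` C¹ and 2π-periodic,
`(1/2π)∫ψ² − ((1/2π)∫ψ)² ≤ (1/2π)∫(ψ')²`. -/
theorem stmt_13 (ψ : ℝ → ℝ) (hψ : ContDiff ℝ 1 ψ)
    (hper : ∀ x, ψ (x + 2 * π) = ψ x) :
    (1 / (2 * π)) * ∫ x in (-π)..π, ψ x ^ 2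
        - ((1 / (2 * π)) * ∫ x in (-π)..π, ψ x) ^ 2
      ≤ (1 / (2 * π)) * ∫ x in (-π)..π, (deriv ψ x) ^ 2 := by
  have hπ := Real.pi_pos
  have hab : -π < π := by linarith
  have hd : Continuous (deriv ψ) := hψ.continuous_deriv le_rfl
  have hc := hψ.continuous
  have h1 := parseval_aux ψ hc hab
  have h2 := parseval_aux (deriv ψ) hd hab
  have hend : ψ π = ψ (-π) := by
    rw [← hper (-π)]; congr 1; ring
  set c : ℝ := (1 / (2 * π)) * ∫ x in (-π)..π, ψ x with hcdef
  rw [intervalIntegral.integral_sub (Continuous.intervalIntegrable (u := fun x => ψ x ^ 2) (by fun_prop) _ _)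
    intervalIntegrable_const, intervalIntegral.integral_const, mul_sub]
  have e : 1 / (2 * π) * ((π - -π) • c ^ 2) = c ^ 2 := by
    rw [smul_eq_mul]; field_simp; ring
  rw [e]
  have h0 : ‖fourierCoeffOn hab (fun x => (ψ x : ℂ)) 0‖ ^ 2 = c ^ 2 := by
    rw [fourierCoeffOn_eq_integral]
    simp only [neg_zero, fourier_zero, one_smul]
    rw [intervalIntegral.integral_ofReal, norm_smul, Complex.norm_real, mul_pow, hcdef, mul_pow]
    simp only [Real.norm_eq_abs, sq_abs]
    congr 2; ring
  have h3 : HasSum (fun i : ℤ => if i = 0 then c ^ 2 else 0) (c ^ 2) := hasSum_ite_eq 0 _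
  refine hasSum_le (fun i => ?_) (h1.sub h3) h2
  by_cases hi : i = 0
  · subst hi
    simp only [h0, if_true, sub_self]
    positivity
  · simp only [hi, if_false, sub_zero]
    have key := fourierCoeffOn_of_hasDerivAt hab (f := fun x => (ψ x : ℂ))
      (f' := fun x => ((deriv ψ x : ℝ) : ℂ)) hi
      (fun x _ => ((hψ.differentiable one_ne_zero x).hasDerivAt).ofReal_comp)
      ((Complex.continuous_ofReal.comp hd).intervalIntegrable _ _)
    rw [key, hend]
    gcongr
    have hi1 : (1 : ℝ) ≤ ‖(i : ℂ)‖ := by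
      rw [Complex.norm_intCast]
      exact_mod_cast Int.one_le_abs hi
    have : (1 / (-2 * π * Complex.I * i) * (fourier (-i) ((-π : ℝ) : AddCircle (π - -π)) * ((ψ (-π) : ℂ) - (ψ (-π) : ℂ)) - (((π : ℝ) : ℂ) - ((-π : ℝ) : ℂ)) * fourierCoeffOn hab (fun x => ((deriv ψ x : ℝ) : ℂ)) i) : ℂ) = fourierCoeffOn hab (fun x => ((deriv ψ x : ℝ) : ℂ)) i / (Complex.I * i) := by
      have : (π : ℂ) ≠ 0 := by exact_mod_cast hπ.ne'
      have : (i : ℂ) ≠ 0 := by exact_mod_cast hi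
      push_cast
      field_simp
      ring
    rw [this, norm_div, norm_mul, Complex.norm_I, one_mul]
    exact div_le_self (norm_nonneg _) hi1
end

section
/- Let ψ : ℝ → ℝ be a C¹ function that is π-periodic. Then (1/2π)∫_{−π}^{π} ψ² dx − ((1/2π)∫_{−π}^{π} ψ dx)² ≤ (1/8π)∫_{−π}^{π} (ψ')² dx. -/
open Real

lemma aux_memLp (f : ℝ → ℂ) (hf : Continuous f) (a b : ℝ) (hab : a ≤ b) :
    MeasureTheory.MemLp f 2 (MeasureTheory.volume.restrict (Set.Ioc a b)) := by
  rw [MeasureTheory.memLp_two_iff_integrable_sq_norm hf.aestronglyMeasurable]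
  have h : Continuous fun x => ‖f x‖ ^ 2 := by fun_prop
  have := h.intervalIntegrable (μ := MeasureTheory.volume) a b
  rw [intervalIntegrable_iff_integrableOn_Ioc_of_le hab] at this
  exact this

lemma aux_double (f : ℝ → ℝ) (hf : Continuous f) (hper : ∀ x, f (x + π) = f x) :
    ∫ x in (-π)..π, f x = 2 * ∫ x in (0:ℝ)..π, f x := by
  have hp : Function.Periodic f π := hper
  have h1 := hp.intervalIntegral_add_eq (-π) 0
  simp only [neg_add_cancel, zero_add] at h1
  rw [← intervalIntegral.integral_add_adjacent_intervals
    (hf.intervalIntegrable (-π) 0) (hf.intervalIntegrable 0 π), h1]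
  ring

lemma aux_half (ψ : ℝ → ℝ) (hψ : ContDiff ℝ 1 ψ) (hper : ∀ x, ψ (x + π) = ψ x) :
    π⁻¹ * ∫ x in (0:ℝ)..π, ψ x ^ 2 ≤
      (1 / 4) * (π⁻¹ * ∫ x in (0:ℝ)..π, (deriv ψ x) ^ 2)
        + (π⁻¹ * ∫ x in (0:ℝ)..π, ψ x) ^ 2 := by
  have hc : Continuous ψ := hψ.continuous
  have hd : Continuous (deriv ψ) := hψ.continuous_deriv le_rfl
  have hcC : Continuous fun x => (ψ x : ℂ) := by fun_prop
  have hdC : Continuous fun x => ((deriv ψ x : ℝ) : ℂ) := by fun_prop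
  have H1 := hasSum_sq_fourierCoeffOn pi_pos (aux_memLp _ hcC 0 π pi_pos.le)
  have H2 := hasSum_sq_fourierCoeffOn pi_pos (aux_memLp _ hdC 0 π pi_pos.le)
  simp only [Complex.norm_real, Real.norm_eq_abs, sq_abs, sub_zero, smul_eq_mul] at H1 H2
  have H3 := hasSum_ite_eq (0:ℤ) ((π⁻¹ * ∫ x in (0:ℝ)..π, ψ x) ^ 2)
  refine hasSum_le (fun n => ?_) H1 ((H2.mul_left (1/4)).add H3)
  by_cases hn : n = 0
  · subst hn
    have : fourierCoeffOn pi_pos (fun x => (ψ x : ℂ)) 0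
        = ((π⁻¹ * ∫ x in (0:ℝ)..π, ψ x : ℝ) : ℂ) := by
      rw [fourierCoeffOn_eq_integral]
      simp [intervalIntegral.integral_ofReal]
    rw [this, Complex.norm_real, Real.norm_eq_abs, sq_abs]
    simp only [if_true]
    have : 0 ≤ ‖fourierCoeffOn pi_pos (fun x => ((deriv ψ x : ℝ) : ℂ)) 0‖ ^ 2 := by positivity
    linarith
  · have h := fourierCoeffOn_of_hasDerivAt pi_pos hn (f := fun x => (ψ x : ℂ))
      (f' := fun x => ((deriv ψ x : ℝ) : ℂ))
      (fun x _ => ((hψ.differentiable one_ne_zero x).hasDerivAt).ofReal_comp)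
      (hdC.intervalIntegrable _ _)
    have h0 : ψ π = ψ 0 := by simpa using hper 0
    have hn1 : (1:ℝ) ≤ |(n:ℝ)| := by exact_mod_cast Int.one_le_abs hn
    have hE : ‖fourierCoeffOn pi_pos (fun x => (ψ x : ℂ)) n‖ * (2 * |(n:ℝ)|)
        = ‖fourierCoeffOn pi_pos (fun x => ((deriv ψ x : ℝ) : ℂ)) n‖ := by
      rw [h, h0]
      simp only [sub_self, mul_zero, zero_sub, norm_mul, norm_neg, norm_div]
      simp [abs_of_pos pi_pos]
      field_simp
    rw [← hE]
    simp only [hn, if_false, add_zero]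
    have := sq_nonneg ‖fourierCoeffOn pi_pos (fun x => (ψ x : ℂ)) n‖
    nlinarith [mul_le_mul_of_nonneg_left (one_le_pow₀ hn1 (n := 2)) this]

/-- Improved Wirtinger inequality for π-periodic C¹ functions:
`(1/2π)∫ψ² − ((1/2π)∫ψ)² ≤ (1/8π)∫(ψ')²`. -/
theorem stmt_14 (ψ : ℝ → ℝ) (hψ : ContDiff ℝ 1 ψ)
    (hper : ∀ x, ψ (x + π) = ψ x) :
    (1 / (2 * π)) * ∫ x in (-π)..π, ψ x ^ 2
        - ((1 / (2 * π)) * ∫ x in (-π)..π, ψ x) ^ 2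
      ≤ (1 / (8 * π)) * ∫ x in (-π)..π, (deriv ψ x) ^ 2 := by
  have hc : Continuous ψ := hψ.continuous
  have hd : Continuous (deriv ψ) := hψ.continuous_deriv le_rfl
  have hdper : ∀ x, deriv ψ (x + π) = deriv ψ x := by
    intro x
    rw [← deriv_comp_add_const]
    congr 1
    exact funext hper
  have hc2 : Continuous fun x => ψ x ^ 2 := by fun_prop
  have hd2 : Continuous fun x => deriv ψ x ^ 2 := by fun_prop
  have key := aux_half ψ hψ hper
  rw [intervalIntegral.integral_sub (hc2.intervalIntegrable _ _)
    (continuous_const.intervalIntegrable _ _), intervalIntegral.integral_const,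
    aux_double ψ hc hper, aux_double _ hc2 (fun x => by simp only [hper]),
    aux_double _ hd2 (fun x => by simp only [hdper])]
  generalize (∫ x in (0:ℝ)..π, ψ x ^ 2) = A at *
  generalize (∫ x in (0:ℝ)..π, ψ x) = B at *
  generalize (∫ x in (0:ℝ)..π, deriv ψ x ^ 2) = C at *
  have hpi := pi_ne_zero
  have e1 : 1 / (2 * π) * (2 * A - (π - -π) • (1 / (2 * π) * (2 * B)) ^ 2)
      = π⁻¹ * A - (π⁻¹ * B) ^ 2 := by
    simp only [smul_eq_mul]
    field_simp
    ring
  have e2 : 1 / (8 * π) * (2 * C) = (1 / 4) * (π⁻¹ * C) := by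
    field_simp
    ring
  rw [e1, e2]
  linarith
end

section
/- For the standard Gaussian measure γ on ℝⁿ and a convex body K with Gaussian barycenter at the origin (∫_K x dγ(x) = 0), the following holds: ∫_K |x|⁴ dγ − (1/γ(K))(∫_K |x|² dγ)² − 2∫_K |x|² dγ ≤ 0. -/
open MeasureTheory

/-! ### Abstract Hilbert space part -/

section AbstractHilbert

variable {E P : Type*} [NormedAddCommGroup E] [InnerProductSpace ℝ E] [CompleteSpace E]
  [AddCommGroup P] [Module ℝ P]

/-- A linear map into a Hilbert space whose range has trivial orthogonal has dense range. -/
theorem cfm_dense_of_orth (T : P →ₗ[ℝ] E)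
    (h : ∀ g : E, (∀ p, inner ℝ g (T p) = 0) → g = 0) (f : E) {ε : ℝ} (hε : 0 < ε) :
    ∃ p, ‖f - T p‖ < ε := by
  have h1 : (LinearMap.range T)ᗮ = ⊥ := by
    rw [eq_bot_iff]
    intro g hg
    rw [Submodule.mem_bot]
    apply h
    intro p
    rw [Submodule.mem_orthogonal'] at hg
    exact hg _ ⟨p, rfl⟩
  have h2 := (Submodule.topologicalClosure_eq_top_iff (K := LinearMap.range T)).2 h1
  have h3 : f ∈ closure (LinearMap.range T : Set E) := by
    rw [← Submodule.topologicalClosure_coe, h2]; trivial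
  obtain ⟨y, ⟨p, rfl⟩, hp⟩ := Metric.mem_closure_iff.1 h3 ε hε
  exact ⟨p, by rwa [dist_eq_norm] at hp⟩

/-- Same with codimension one. -/
theorem cfm_dense_of_orth_one (T : P →ₗ[ℝ] E) (e : E) (he : ∀ p, inner ℝ (T p) e = 0)
    (h : ∀ g : E, (∀ p, inner ℝ g (T p) = 0) → inner ℝ g e = 0 → g = 0) (f : E)
    (hf : inner ℝ f e = 0) {ε : ℝ} (hε : 0 < ε) :
    ∃ p, ‖f - T p‖ < ε := by
  let T' : P × ℝ →ₗ[ℝ] E := T.coprod (LinearMap.toSpanSingleton ℝ E e)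
  have hT' : ∀ p c, T' (p, c) = T p + c • e := by
    intro p c; simp [T']
  obtain ⟨⟨p, c⟩, hp⟩ := cfm_dense_of_orth T' (by
    intro g hg
    apply h
    · intro p; simpa [hT'] using hg (p, 0)
    · simpa [hT'] using hg (0, 1)) f hε
  refine ⟨p, lt_of_le_of_lt ?_ hp⟩
  rw [hT']
  have h0 : inner ℝ (f - T p) (c • e) = 0 := by
    rw [inner_smul_right, inner_sub_left, hf, he]; simp
  have h1 : ‖f - (T p + c • e)‖ ^ 2 = ‖f - T p‖ ^ 2 + ‖c • e‖ ^ 2 := by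
    have := norm_sub_sq_real (f - T p) (c • e)
    rw [h0] at this
    rw [← sub_sub, this]; ring
  apply le_of_sq_le_sq _ (norm_nonneg _)
  rw [h1]; nlinarith [sq_nonneg ‖c • e‖]

variable {n : ℕ} (ι : P →ₗ[ℝ] E) (D : Fin n → P →ₗ[ℝ] P) (Lam : P →ₗ[ℝ] E)

/-- An element orthogonal to the range of `Lam` is approximated by elements of small gradient. -/
theorem cfm_kernel (hI : ∀ p q, inner ℝ (Lam p) (ι q) = ∑ i, inner ℝ (ι (D i p)) (ι (D i q)))
    (g : E) (hg : ∀ p, inner ℝ g (Lam p) = 0) {l : ℝ} (hl : 0 < l) (p : P) :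
    l / 2 * ‖ι p - g‖ ^ 2 + ∑ i, ‖ι (D i p)‖ ^ 2 ≤
      ‖l • g - (l • ι p + Lam p)‖ ^ 2 / (2 * l) := by
  set r := l • g - (l • ι p + Lam p) with hr
  have e1 : inner ℝ r (g - ι p) = l * ‖ι p - g‖ ^ 2 + ∑ i, ‖ι (D i p)‖ ^ 2 := by
    have hI' := hI p p
    simp only [real_inner_self_eq_norm_sq] at hI'
    rw [← hI']
    have : r = l • (g - ι p) - Lam p := by rw [hr]; module
    rw [this, inner_sub_left, inner_smul_left, real_inner_self_eq_norm_sq, inner_sub_right (Lam p),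
      real_inner_comm g (Lam p), hg p, norm_sub_rev g (ι p)]
    simp
  have e2 : inner ℝ r (g - ι p) ≤ ‖r‖ * ‖ι p - g‖ := by
    rw [norm_sub_rev (ι p) g]; exact real_inner_le_norm _ _
  have e3 : ‖r‖ * ‖ι p - g‖ ≤ ‖r‖ ^ 2 / (2 * l) + l / 2 * ‖ι p - g‖ ^ 2 := by
    have : ‖r‖ ^ 2 / (2 * l) + l / 2 * ‖ι p - g‖ ^ 2 - ‖r‖ * ‖ι p - g‖
        = (‖r‖ - l * ‖ι p - g‖) ^ 2 / (2 * l) := by field_simp; ring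
    have h2 : 0 ≤ (‖r‖ - l * ‖ι p - g‖) ^ 2 / (2 * l) := by positivity
    linarith
  linarith

theorem cfm_var_aux (f v : E) (ε : ℝ) (h : ‖f - v‖ < ε) (hε : 0 < ε) :
    ‖f‖ ^ 2 ≤ 2 * inner ℝ f v - ‖v‖ ^ 2 + ε ^ 2 := by
  have h1 := norm_sub_sq_real f v
  have h2 : ‖f - v‖ ^ 2 ≤ ε ^ 2 := by gcongr
  linarith

/-- Poincaré inequality from Bochner and density. -/
theorem cfm_poincare (hI : ∀ p q, inner ℝ (Lam p) (ι q) = ∑ i, inner ℝ (ι (D i p)) (ι (D i q)))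
    {κ : ℝ} (hκ : 0 < κ)
    (hB : ∀ p, (∑ i, ∑ j, ‖ι (D j (D i p))‖ ^ 2) + κ * ∑ i, ‖ι (D i p)‖ ^ 2 ≤ ‖Lam p‖ ^ 2)
    (e : P) (hd : ∀ f, inner ℝ f (ι e) = 0 → ∀ ε > 0, ∃ p, ‖f - Lam p‖ < ε)
    (q : P) (hq : inner ℝ (ι q) (ι e) = 0) :
    κ * ‖ι q‖ ^ 2 ≤ ∑ i, ‖ι (D i q)‖ ^ 2 := by
  suffices h : ∀ ε > 0, ‖ι q‖ ^ 2 ≤ (∑ i, ‖ι (D i q)‖ ^ 2) / κ + ε ^ 2 by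
    have : ‖ι q‖ ^ 2 ≤ (∑ i, ‖ι (D i q)‖ ^ 2) / κ := by
      apply le_of_forall_pos_le_add
      intro ε hε
      have := h (√ε) (by positivity)
      rwa [Real.sq_sqrt hε.le] at this
    rw [le_div_iff₀ hκ] at this
    linarith
  intro ε hε
  obtain ⟨p, hp⟩ := hd _ hq ε hε
  have h1 := cfm_var_aux _ _ ε hp hε
  have h2 := hB p
  rw [real_inner_comm, hI] at h1
  have h3 : 0 ≤ ∑ i, ∑ j, ‖ι (D j (D i p))‖ ^ 2 := by positivity
  have h4 : 2 * ∑ i, inner ℝ (ι (D i p)) (ι (D i q)) ≤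
      κ * ∑ i, ‖ι (D i p)‖ ^ 2 + (∑ i, ‖ι (D i q)‖ ^ 2) / κ := by
    rw [Finset.mul_sum, Finset.mul_sum, Finset.sum_div, ← Finset.sum_add_distrib]
    apply Finset.sum_le_sum
    intro i _
    have a := real_inner_le_norm (ι (D i p)) (ι (D i q))
    have : κ * ‖ι (D i p)‖ ^ 2 + ‖ι (D i q)‖ ^ 2 / κ - 2 * (‖ι (D i p)‖ * ‖ι (D i q)‖)
        = (κ * ‖ι (D i p)‖ - ‖ι (D i q)‖) ^ 2 / κ := by field_simp; ring
    have h2 : 0 ≤ (κ * ‖ι (D i p)‖ - ‖ι (D i q)‖) ^ 2 / κ := by positivity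
    linarith
  linarith

/-- The second order Poincaré inequality. -/
theorem cfm_second (hI : ∀ p q, inner ℝ (Lam p) (ι q) = ∑ i, inner ℝ (ι (D i p)) (ι (D i q)))
    {κ : ℝ} (hκ : 0 < κ)
    (hB : ∀ p, (∑ i, ∑ j, ‖ι (D j (D i p))‖ ^ 2) + κ * ∑ i, ‖ι (D i p)‖ ^ 2 ≤ ‖Lam p‖ ^ 2)
    (e : P) (he : ∀ i, D i e = 0) (hZ : 0 < ‖ι e‖ ^ 2)
    (hd : ∀ f, inner ℝ f (ι e) = 0 → ∀ ε > 0, ∃ p, ‖f - Lam p‖ < ε)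
    (q : P) :
    ‖ι q‖ ^ 2 - (inner ℝ (ι q) (ι e)) ^ 2 / ‖ι e‖ ^ 2 ≤
      (∑ i, ‖ι (D i q)‖ ^ 2) / (2 * κ)
        + (∑ i, (inner ℝ (ι (D i q)) (ι e)) ^ 2) / (κ * ‖ι e‖ ^ 2) := by
  set Z := ‖ι e‖ ^ 2 with hZdef
  have hZZ : inner ℝ (ι e) (ι e) = Z := real_inner_self_eq_norm_sq _
  -- centering
  let cen : P → P := fun p => p - (inner ℝ (ι p) (ι e) / Z) • e
  have hcen : ∀ p, inner ℝ (ι (cen p)) (ι e) = 0 := by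
    intro p
    simp only [cen, map_sub, map_smul, inner_sub_left, inner_smul_left, hZZ]
    simp; field_simp; simp
  have hDcen : ∀ p i, D i (cen p) = D i p := by
    intro p i; simp [cen, he]
  have hncen : ∀ p, ‖ι (cen p)‖ ^ 2 = ‖ι p‖ ^ 2 - (inner ℝ (ι p) (ι e)) ^ 2 / Z := by
    intro p
    have h1 := norm_sub_sq_real (ι p) ((inner ℝ (ι p) (ι e) / Z) • ι e)
    simp only [cen, map_sub, map_smul]
    rw [h1, inner_smul_right, norm_smul, mul_pow, ← hZdef, Real.norm_eq_abs, sq_abs]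
    field_simp; ring
  rw [← hncen]
  apply le_of_forall_pos_le_add
  intro ε hε
  obtain ⟨p, hp⟩ := hd _ (hcen q) (√ε) (by positivity)
  have h1 := cfm_var_aux _ _ _ hp (by positivity)
  rw [Real.sq_sqrt hε.le, real_inner_comm, hI] at h1
  simp only [hDcen] at h1
  have h2 := hB p
  have h3 : ∀ i, κ * (‖ι (D i p)‖ ^ 2 - (inner ℝ (ι (D i p)) (ι e)) ^ 2 / Z) ≤
      ∑ j, ‖ι (D j (D i p))‖ ^ 2 := by
    intro i
    have := cfm_poincare ι D Lam hI hκ hB e hd (cen (D i p)) (hcen _)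
    simpa only [hncen, hDcen] using this
  have h4 : κ * ∑ i, (‖ι (D i p)‖ ^ 2 - (inner ℝ (ι (D i p)) (ι e)) ^ 2 / Z) ≤
      ∑ i, ∑ j, ‖ι (D j (D i p))‖ ^ 2 := by
    rw [Finset.mul_sum]; exact Finset.sum_le_sum fun i _ => h3 i
  have h5 : ∀ i, 2 * inner ℝ (ι (D i p)) (ι (D i q)) -
      κ * (‖ι (D i p)‖ ^ 2 - (inner ℝ (ι (D i p)) (ι e)) ^ 2 / Z) - κ * ‖ι (D i p)‖ ^ 2 ≤
      ‖ι (D i q)‖ ^ 2 / (2 * κ) + (inner ℝ (ι (D i q)) (ι e)) ^ 2 / (κ * Z) := by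
    intro i
    set a := D i p
    set b := D i q
    set s := inner ℝ (ι a) (ι e)
    set t := inner ℝ (ι b) (ι e)
    have k1 : ι a = ι (cen a) + (s / Z) • ι e := by simp [cen, s]
    have k2 : inner ℝ (ι a) (ι b) = inner ℝ (ι (cen a)) (ι b) + s / Z * t := by
      conv_lhs => rw [k1]
      rw [inner_add_left, inner_smul_left, real_inner_comm (ι b) (ι e)]; simp [t]
    have k3 := real_inner_le_norm (ι (cen a)) (ι b)
    have k4 := hncen a
    have k5 : ‖ι a‖ ^ 2 = ‖ι (cen a)‖ ^ 2 + s ^ 2 / Z := by rw [k4]; ring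
    rw [k2, k5]
    have k6 : ‖ι b‖ ^ 2 / (2 * κ) + t ^ 2 / (κ * Z) - (2 * (‖ι (cen a)‖ * ‖ι b‖ + s / Z * t)
        - κ * (‖ι (cen a)‖ ^ 2 + s ^ 2 / Z - s ^ 2 / Z) - κ * (‖ι (cen a)‖ ^ 2 + s ^ 2 / Z)) =
        (2 * κ * ‖ι (cen a)‖ - ‖ι b‖) ^ 2 / (2 * κ) + (κ * s - t) ^ 2 / (κ * Z) := by
      field_simp; ring
    have k7 : 0 ≤ (2 * κ * ‖ι (cen a)‖ - ‖ι b‖) ^ 2 / (2 * κ) + (κ * s - t) ^ 2 / (κ * Z) := by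
      positivity
    linarith
  have h6 := Finset.sum_le_sum fun i (_ : i ∈ Finset.univ) => h5 i
  simp only [Finset.sum_sub_distrib, Finset.sum_add_distrib, ← Finset.mul_sum,
    ← Finset.sum_div] at h6 h4
  linarith

end AbstractHilbert

/-! ### The Gaussian measure and polynomials -/

/-- standard Gaussian measure -/
noncomputable def cfmG (n : ℕ) : Measure (Fin n → ℝ) :=
  Measure.pi fun _ : Fin n => ProbabilityTheory.gaussianReal 0 1

instance cfmG_prob (n : ℕ) : IsProbabilityMeasure (cfmG n) := by
  unfold cfmG; infer_instance

/-- its density -/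
noncomputable def cfmRho (n : ℕ) (x : Fin n → ℝ) : ℝ :=
  ∏ i, ProbabilityTheory.gaussianPDFReal 0 1 (x i)

theorem cfmRho_nonneg (n : ℕ) (x : Fin n → ℝ) : 0 ≤ cfmRho n x :=
  Finset.prod_nonneg fun _ _ => ProbabilityTheory.gaussianPDFReal_nonneg _ _ _

theorem cfmRho_measurable (n : ℕ) : Measurable (cfmRho n) := by
  unfold cfmRho
  apply Finset.measurable_prod
  intro i _
  exact (ProbabilityTheory.measurable_gaussianPDFReal 0 1).comp (measurable_pi_apply i)

theorem cfmG_density (n : ℕ) :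
    cfmG n = volume.withDensity (fun x => ENNReal.ofReal (cfmRho n x)) := by
  unfold cfmG
  apply Measure.pi_eq
  intro s hs
  rw [withDensity_apply _ (MeasurableSet.univ_pi hs), volume_pi, Measure.restrict_pi_pi,
    ← ofReal_integral_eq_lintegral_ofReal]
  · unfold cfmRho
    rw [integral_fintype_prod_eq_prod (fun _ x => ProbabilityTheory.gaussianPDFReal 0 1 x),
      ENNReal.ofReal_prod_of_nonneg]
    · refine Finset.prod_congr rfl fun i _ => ?_
      rw [ProbabilityTheory.gaussianReal_apply_eq_integral _ one_ne_zero]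
    · intro i _
      exact integral_nonneg fun x => ProbabilityTheory.gaussianPDFReal_nonneg _ _ _
  · unfold cfmRho
    apply Integrable.fintype_prod (f := fun _ x => ProbabilityTheory.gaussianPDFReal 0 1 x)
    intro i
    exact (ProbabilityTheory.integrable_gaussianPDFReal 0 1).restrict
  · exact Filter.Eventually.of_forall fun x => cfmRho_nonneg n x

theorem cfmG_ac (n : ℕ) : cfmG n ≪ volume := by
  rw [cfmG_density]; exact withDensity_absolutelyContinuous _ _

theorem cfm_integral_G {n : ℕ} (F : (Fin n → ℝ) → ℝ) :
    ∫ x, F x ∂(cfmG n) = ∫ x, F x * cfmRho n x := by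
  rw [cfmG_density, integral_withDensity_eq_integral_toReal_smul]
  · congr 1; ext x
    rw [ENNReal.toReal_ofReal (cfmRho_nonneg n x), smul_eq_mul, mul_comm]
  · exact (cfmRho_measurable n).ennreal_ofReal
  · simp

theorem cfm_integrable_G {n : ℕ} (F : (Fin n → ℝ) → ℝ) :
    Integrable F (cfmG n) ↔ Integrable (fun x => F x * cfmRho n x) volume := by
  rw [cfmG_density, integrable_withDensity_iff]
  · have : ∀ x, (ENNReal.ofReal (cfmRho n x)).toReal = cfmRho n x := fun x =>
      ENNReal.toReal_ofReal (cfmRho_nonneg n x)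
    simp only [this]
  · exact (cfmRho_measurable n).ennreal_ofReal
  · simp

theorem cfmRho_eq (n : ℕ) (x : Fin n → ℝ) :
    cfmRho n x = (∏ _i : Fin n, (√(2 * Real.pi))⁻¹) * Real.exp (- ∑ i, x i ^ 2 / 2) := by
  unfold cfmRho ProbabilityTheory.gaussianPDFReal
  rw [Finset.prod_mul_distrib, ← Real.exp_sum]
  simp [neg_div]

theorem cfm_lineDeriv_coord {n : ℕ} (i j : Fin n) (x : Fin n → ℝ) :
    HasLineDerivAt ℝ (fun y : Fin n → ℝ => y j) (if i = j then 1 else 0) x (Pi.single i 1) := by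
  unfold HasLineDerivAt
  have : (fun t : ℝ => (x + t • (Pi.single i (1 : ℝ) : Fin n → ℝ)) j) =
      fun t => x j + t * (if i = j then 1 else 0) := by
    ext t
    by_cases h : i = j
    · subst h; simp
    · have h' : j ≠ i := fun h2 => h h2.symm
      simp [h, Pi.single_eq_of_ne h']
  rw [this]
  simpa using (((hasDerivAt_id (0 : ℝ)).mul_const (if i = j then (1 : ℝ) else 0)).const_add (x j))

theorem cfm_lineDeriv_rho {n : ℕ} (i : Fin n) (x : Fin n → ℝ) :
    HasLineDerivAt ℝ (cfmRho n) (- x i * cfmRho n x) x (Pi.single i 1) := by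
  have h0 : cfmRho n = fun x : Fin n → ℝ =>
    (∏ _i : Fin n, (√(2 * Real.pi))⁻¹) * Real.exp (- ∑ i, x i ^ 2 / 2) := funext (cfmRho_eq n)
  rw [h0]
  unfold HasLineDerivAt
  have h1 : ∀ j, HasDerivAt (fun t : ℝ => (x + t • (Pi.single i (1 : ℝ) : Fin n → ℝ)) j ^ 2 / 2)
      (if i = j then x j else 0) 0 := by
    intro j
    have := ((show HasDerivAt (fun t : ℝ => (x + t • (Pi.single i (1 : ℝ) : Fin n → ℝ)) j) _ 0 from
      cfm_lineDeriv_coord i j x).pow 2).div_const 2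
    convert! this using 1
    by_cases h : i = j <;> simp [h]
  have h2 := (HasDerivAt.fun_sum (u := Finset.univ) fun j _ => h1 j).neg.exp.const_mul
    (∏ _i : Fin n, (√(2 * Real.pi))⁻¹)
  convert! h2 using 1
  simp
  ring

/-- Gaussian integration by parts -/
theorem cfm_ibp {n : ℕ} (i : Fin n) (F F' : (Fin n → ℝ) → ℝ)
    (hF : ∀ x, HasLineDerivAt ℝ F (F' x) x (Pi.single i 1))
    (h1 : Integrable F (cfmG n)) (h2 : Integrable F' (cfmG n))
    (h3 : Integrable (fun x => x i * F x) (cfmG n)) :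
    ∫ x, F' x ∂(cfmG n) = ∫ x, x i * F x ∂(cfmG n) := by
  rw [cfm_integral_G, cfm_integral_G]
  have := integral_bilinear_hasLineDerivAt_right_eq_neg_left_of_integrable (μ := volume)
    (f := F) (f' := F') (g := cfmRho n) (g' := fun x => - x i * cfmRho n x) (v := Pi.single i 1)
    (B := ContinuousLinearMap.mul ℝ ℝ)
    (by simpa using (cfm_integrable_G F').1 h2)
    (by
      have := ((cfm_integrable_G _).1 h3).neg
      refine this.congr (Filter.Eventually.of_forall fun x => ?_)
      simp; ring)
    (by simpa using (cfm_integrable_G F).1 h1)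
    (fun x _ => hF x) (fun x _ => cfm_lineDeriv_rho i x)
  simp only [ContinuousLinearMap.mul_apply'] at this
  rw [eq_comm, neg_eq_iff_eq_neg] at this
  rw [this, ← integral_neg]
  congr 1; ext x; ring

/-- evaluation of polynomials as a linear map -/
noncomputable def cfmEv {n : ℕ} (p : MvPolynomial (Fin n) ℝ) (x : Fin n → ℝ) : ℝ :=
  MvPolynomial.eval x p

theorem cfmEv_lineDeriv {n : ℕ} (i : Fin n) (p : MvPolynomial (Fin n) ℝ) (x : Fin n → ℝ) :
    HasLineDerivAt ℝ (cfmEv p) (cfmEv (MvPolynomial.pderiv i p) x) x (Pi.single i 1) := by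
  unfold cfmEv
  induction p using MvPolynomial.induction_on with
  | C a =>
    simp only [MvPolynomial.eval_C, MvPolynomial.pderiv_C, map_zero]
    exact hasDerivAt_const _ _
  | add p q hp hq =>
    simp only [map_add]
    exact HasDerivAt.add hp hq
  | mul_X p j hp =>
    simp only [map_mul, MvPolynomial.eval_X, MvPolynomial.pderiv_mul, map_add,
      MvPolynomial.pderiv_X]
    have := HasDerivAt.mul hp (cfm_lineDeriv_coord i j x)
    unfold HasLineDerivAt
    convert! this using 1
    by_cases h : i = j
    · subst h; simp
    · have h' : j ≠ i := fun h2 => h h2.symm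
      simp [h, Pi.single_eq_of_ne h']

theorem cfmEv_continuous {n : ℕ} (p : MvPolynomial (Fin n) ℝ) : Continuous (cfmEv p) :=
  MvPolynomial.continuous_eval p

theorem cfmEv_memLp_all {n : ℕ} (p : MvPolynomial (Fin n) ℝ) :
    ∀ k : ℕ, MemLp (cfmEv p) k (cfmG n) := by
  induction p using MvPolynomial.induction_on with
  | C a =>
    intro k
    have : cfmEv (MvPolynomial.C a : MvPolynomial (Fin n) ℝ) = fun _ => a := by
      ext x; simp [cfmEv]
    rw [this]; exact memLp_const a
  | add p q hp hq =>
    intro k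
    have : cfmEv (p + q) = cfmEv p + cfmEv q := by ext x; simp [cfmEv]
    rw [this]; exact (hp k).add (hq k)
  | mul_X p j hp =>
    intro k
    have : cfmEv (p * MvPolynomial.X j) = cfmEv p * fun x => x j := by ext x; simp [cfmEv]
    rw [this]
    have hX : MemLp (fun x : Fin n → ℝ => x j) ((2 * k : ℕ) : ENNReal) (cfmG n) :=
      (ProbabilityTheory.memLp_id_gaussianReal' (μ := 0) (v := 1) ((2 * k : ℕ) : ENNReal)
        (ENNReal.natCast_ne_top _)).comp_measurePreserving
        (measurePreserving_eval (fun _ : Fin n => ProbabilityTheory.gaussianReal 0 1) j)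
    have : ENNReal.HolderTriple ((2 * k : ℕ) : ENNReal) ((2 * k : ℕ) : ENNReal) k := by
      constructor
      push_cast
      rw [ENNReal.mul_inv (by simp) (by simp), ← add_mul, ENNReal.inv_two_add_inv_two, one_mul]
    exact hX.mul' (hp (2 * k))

theorem cfmEv_memLp {n : ℕ} (p : MvPolynomial (Fin n) ℝ) : MemLp (cfmEv p) 2 (cfmG n) :=
  cfmEv_memLp_all p 2

theorem cfmEv_integrable {n : ℕ} (p : MvPolynomial (Fin n) ℝ) : Integrable (cfmEv p) (cfmG n) :=
  (cfmEv_memLp p).integrable (by norm_num)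

theorem cfm_exp_memLp {n : ℕ} (c : Fin n → ℝ) :
    MemLp (fun x : Fin n → ℝ => Real.exp (∑ i, c i * x i)) 2 (cfmG n) := by
  rw [memLp_two_iff_integrable_sq (Continuous.aestronglyMeasurable (by fun_prop))]
  have : (fun x : Fin n → ℝ => Real.exp (∑ i, c i * x i) ^ 2) =
      fun x => ∏ i, Real.exp ((2 * c i) * x i) := by
    ext x
    rw [← Real.exp_sum, ← Real.exp_nat_mul]
    congr 1
    rw [Finset.mul_sum]; push_cast
    exact Finset.sum_congr rfl fun i _ => by ring
  rw [this]
  exact Integrable.fintype_prod (f := fun i x => Real.exp ((2 * c i) * x)) fun i =>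
    ProbabilityTheory.integrable_exp_mul_gaussianReal _

/-- completeness of polynomials in Gaussian `L²` -/
theorem cfm_poly_complete {n : ℕ} (g : (Fin n → ℝ) → ℝ) (hg : MemLp g 2 (cfmG n))
    (h : ∀ p, ∫ x, g x * cfmEv p x ∂(cfmG n) = 0) : g =ᵐ[cfmG n] 0 := by
  have hgi : Integrable g (cfmG n) := hg.integrable (by norm_num)
  -- vanishing Fourier transform
  have key : ∀ L : StrongDual ℝ (Fin n → ℝ),
      ∫ x, (g x : ℂ) * Complex.exp (L x * Complex.I) ∂(cfmG n) = 0 := by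
    intro L
    let c : Fin n → ℝ := fun i => L (Pi.single i 1)
    have hL : ∀ x, L x = ∑ i, c i * x i := by
      intro x
      conv_lhs => rw [← Finset.univ_sum_single x]
      rw [map_sum]
      refine Finset.sum_congr rfl fun i _ => ?_
      have : (Pi.single i (x i) : Fin n → ℝ) = x i • Pi.single i 1 := by
        rw [← Pi.single_smul]; simp
      rw [this, map_smul, smul_eq_mul, mul_comm]
    let lp : MvPolynomial (Fin n) ℝ := ∑ i, MvPolynomial.C (c i) * MvPolynomial.X i
    have hlp : ∀ x, cfmEv lp x = L x := by
      intro x; rw [hL]; simp [cfmEv, lp]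
    have hsum := hasSum_integral_of_dominated_convergence (μ := cfmG n)
      (F := fun (k : ℕ) x => (g x : ℂ) * ((L x * Complex.I) ^ k / (k.factorial : ℂ)))
      (f := fun x => (g x : ℂ) * Complex.exp (L x * Complex.I))
      (fun k x => |g x| * (|L x| ^ k / k.factorial))
      (by
        intro k
        have h1 : AEStronglyMeasurable (fun x => (g x : ℂ)) (cfmG n) :=
          Complex.continuous_ofReal.comp_aestronglyMeasurable hg.1
        refine h1.mul (Continuous.aestronglyMeasurable ?_)
        fun_prop)
      (by
        intro k
        refine Filter.Eventually.of_forall fun x => ?_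
        simp)
      (by
        refine Filter.Eventually.of_forall fun x => ?_
        exact (Real.summable_pow_div_factorial |L x|).mul_left _)
      (by
        have e1 : (fun x => ∑' k : ℕ, |g x| * (|L x| ^ k / k.factorial)) =
            fun x => |g x| * Real.exp |L x| := by
          ext x
          rw [tsum_mul_left, Real.exp_eq_exp_ℝ, NormedSpace.exp_eq_tsum_div]
        rw [e1]
        have m1 : MemLp (fun x : Fin n → ℝ => Real.exp (L x) + Real.exp (- L x)) 2 (cfmG n) := by
          have a := cfm_exp_memLp c
          have b := cfm_exp_memLp (fun i => - c i)
          have e2 := a.add b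
          convert! e2 using 1
          ext x
          simp [hL]
        have m2 : Integrable (fun x => |g x| * (Real.exp (L x) + Real.exp (- L x))) (cfmG n) :=
          hg.abs.integrable_mul m1
        refine m2.mono' ?_ ?_
        · refine hg.abs.1.mul (Continuous.aestronglyMeasurable ?_)
          fun_prop
        · refine Filter.Eventually.of_forall fun x => ?_
          rw [Real.norm_eq_abs, abs_of_nonneg (by positivity)]
          gcongr
          rcases abs_cases (L x) with ⟨h, _⟩ | ⟨h, _⟩ <;> rw [h] <;>
          linarith [Real.exp_pos (L x), Real.exp_pos (- L x)])
      (by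
        refine Filter.Eventually.of_forall fun x => ?_
        apply HasSum.mul_left
        rw [Complex.exp_eq_exp_ℂ]
        exact NormedSpace.expSeries_div_hasSum_exp _)
    have hz : ∀ k : ℕ, ∫ x, (g x : ℂ) * ((L x * Complex.I) ^ k / (k.factorial : ℂ)) ∂(cfmG n)
        = 0 := by
      intro k
      have e : ∀ x, (g x : ℂ) * ((L x * Complex.I) ^ k / (k.factorial : ℂ)) =
          ((g x * cfmEv (lp ^ k) x : ℝ) : ℂ) * (Complex.I ^ k / (k.factorial : ℂ)) := by
        intro x
        have : cfmEv (lp ^ k) x = L x ^ k := by rw [← hlp]; simp [cfmEv]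
        rw [this]; push_cast; ring
      simp_rw [e]
      rw [integral_mul_const, integral_complex_ofReal, h]; simp
    simp only [hz] at hsum
    exact hsum.unique hasSum_zero
  -- positive and negative parts
  let mp := (cfmG n).withDensity fun x => ENNReal.ofReal (g x)
  let mn := (cfmG n).withDensity fun x => ENNReal.ofReal (- g x)
  have fp : IsFiniteMeasure mp := isFiniteMeasure_withDensity_ofReal hgi.2
  have fn : IsFiniteMeasure mn := isFiniteMeasure_withDensity_ofReal hgi.neg.2
  have hmeas : AEMeasurable g (cfmG n) := hg.1.aemeasurable
  have hneg : AEMeasurable (fun x => - g x) (cfmG n) := hmeas.neg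
  have heq : mp = mn := by
    apply Measure.ext_of_charFunDual
    ext L
    rw [charFunDual_apply, charFunDual_apply]
    simp only [mp, mn]
    rw [integral_withDensity_eq_integral_toReal_smul₀ (hmeas.ennreal_ofReal)
        (by simp), integral_withDensity_eq_integral_toReal_smul₀ (hneg.ennreal_ofReal)
        (by simp), ← sub_eq_zero, ← integral_sub]
    · rw [← key L]
      congr 1; ext x
      rw [← sub_smul, ENNReal.toReal_ofReal', ENNReal.toReal_ofReal']
      have : max (g x) 0 - max (- g x) 0 = g x := by
        rcases le_total (g x) 0 with h | h
        · rw [max_eq_right h, max_eq_left (by linarith)]; ring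
        · rw [max_eq_left h, max_eq_right (by linarith)]; ring
      rw [this]; simp
    all_goals
      refine hgi.mono ?_ ?_
      · have hc : AEStronglyMeasurable (fun x => Complex.exp ((L x : ℂ) * Complex.I)) (cfmG n) :=
          Continuous.aestronglyMeasurable (by fun_prop)
        first
          | exact (hmeas.ennreal_ofReal.ennreal_toReal).aestronglyMeasurable.smul hc
          | exact (hneg.ennreal_ofReal.ennreal_toReal).aestronglyMeasurable.smul hc
      · refine Filter.Eventually.of_forall fun x => ?_
        rw [norm_smul, Complex.norm_exp_ofReal_mul_I, mul_one, ENNReal.toReal_ofReal',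
          Real.norm_eq_abs, Real.norm_eq_abs, abs_of_nonneg (le_max_right _ _)]
        first
          | exact max_le (le_abs_self _) (abs_nonneg _)
          | exact max_le (neg_le_abs _) (abs_nonneg _)
  have := (withDensity_eq_iff (hmeas.ennreal_ofReal) (hneg.ennreal_ofReal)
    (by
      have := measure_lt_top mp Set.univ
      simp only [mp, withDensity_apply _ MeasurableSet.univ, Measure.restrict_univ] at this
      exact this.ne)).1 heq
  filter_upwards [this] with x hx
  have h1 := congrArg ENNReal.toReal hx
  simp only [Pi.neg_apply, ENNReal.toReal_ofReal'] at h1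
  rcases le_total (g x) 0 with h | h
  · rw [max_eq_right h, max_eq_left (by linarith)] at h1; simp; linarith
  · rw [max_eq_left h, max_eq_right (by linarith)] at h1; simp; linarith

/-! ### Tame functions, potentials -/

/-- functions in all `L^k` -/
def cfmTame {n : ℕ} (f : (Fin n → ℝ) → ℝ) : Prop := ∀ k : ℕ, MemLp f k (cfmG n)

theorem cfmTame_ev {n : ℕ} (p : MvPolynomial (Fin n) ℝ) : cfmTame (cfmEv p) :=
  cfmEv_memLp_all p

theorem cfmTame_coord {n : ℕ} (i : Fin n) : cfmTame (fun x : Fin n → ℝ => x i) := by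
  have := cfmTame_ev (MvPolynomial.X i : MvPolynomial (Fin n) ℝ)
  have e : cfmEv (MvPolynomial.X i : MvPolynomial (Fin n) ℝ) = fun x => x i := by
    ext x; simp [cfmEv]
  rwa [e] at this

theorem cfmTame_bdd {n : ℕ} {f : (Fin n → ℝ) → ℝ} (hf : Continuous f) (C : ℝ)
    (h : ∀ x, |f x| ≤ C) : cfmTame f := fun _ =>
  MemLp.of_bound hf.aestronglyMeasurable C (Filter.Eventually.of_forall h)

theorem cfmTame.add {n : ℕ} {f g : (Fin n → ℝ) → ℝ} (hf : cfmTame f) (hg : cfmTame g) :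
    cfmTame (fun x => f x + g x) := fun k => (hf k).add (hg k)

theorem cfmTame.sub {n : ℕ} {f g : (Fin n → ℝ) → ℝ} (hf : cfmTame f) (hg : cfmTame g) :
    cfmTame (fun x => f x - g x) := fun k => (hf k).sub (hg k)

theorem cfmTame.sum {n : ℕ} {f : Fin n → (Fin n → ℝ) → ℝ} (hf : ∀ i, cfmTame (f i)) :
    cfmTame (fun x => ∑ i, f i x) := fun k => memLp_finsetSum _ fun i _ => hf i k

theorem cfmTame.mul {n : ℕ} {f g : (Fin n → ℝ) → ℝ} (hf : cfmTame f) (hg : cfmTame g) :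
    cfmTame (fun x => f x * g x) := by
  intro k
  have : ENNReal.HolderTriple ((2 * k : ℕ) : ENNReal) ((2 * k : ℕ) : ENNReal) k := by
    constructor
    push_cast
    rw [ENNReal.mul_inv (by simp) (by simp), ← add_mul, ENNReal.inv_two_add_inv_two, one_mul]
  exact (hg (2 * k)).mul' (hf (2 * k))

theorem cfmTame.memLp {n : ℕ} {f : (Fin n → ℝ) → ℝ} (hf : cfmTame f) : MemLp f 2 (cfmG n) :=
  hf 2

theorem cfmTame.integrable {n : ℕ} {f : (Fin n → ℝ) → ℝ} (hf : cfmTame f) :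
    Integrable f (cfmG n) := hf.memLp.integrable (by norm_num)

/-- smooth bounded potentials with almost nonnegative Hessian -/
structure CfmW (n : ℕ) where
  W : (Fin n → ℝ) → ℝ
  W1 : Fin n → (Fin n → ℝ) → ℝ
  W2 : Fin n → Fin n → (Fin n → ℝ) → ℝ
  B : ℝ
  η : ℝ
  cW : Continuous W
  cW1 : ∀ i, Continuous (W1 i)
  cW2 : ∀ i j, Continuous (W2 i j)
  bW : ∀ x, |W x| ≤ B
  bW1 : ∀ i x, |W1 i x| ≤ B
  bW2 : ∀ i j x, |W2 i j x| ≤ B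
  dW : ∀ i x, HasLineDerivAt ℝ W (W1 i x) x (Pi.single i 1)
  dW1 : ∀ i j x, HasLineDerivAt ℝ (W1 i) (W2 i j x) x (Pi.single j 1)
  hess : ∀ x (v : Fin n → ℝ), - η * ∑ i, v i ^ 2 ≤ ∑ j, ∑ i, W2 i j x * v i * v j

namespace CfmW

variable {n : ℕ} (V : CfmW n)

/-- the zero potential -/
def zero (n : ℕ) : CfmW n where
  W := fun _ => 0
  W1 := fun _ _ => 0
  W2 := fun _ _ _ => 0
  B := 0
  η := 0
  cW := continuous_const
  cW1 := fun _ => continuous_const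
  cW2 := fun _ _ => continuous_const
  bW := by simp
  bW1 := by simp
  bW2 := by simp
  dW := fun _ _ => hasDerivAt_const _ _
  dW1 := fun _ _ _ => hasDerivAt_const _ _
  hess := by simp

/-- weight -/
noncomputable def w (x : Fin n → ℝ) : ℝ := Real.exp (- V.W x)

/-- half weight -/
noncomputable def hw (x : Fin n → ℝ) : ℝ := Real.exp (- V.W x / 2)

/-- inverse half weight -/
noncomputable def hi (x : Fin n → ℝ) : ℝ := Real.exp (V.W x / 2)

theorem hw_sq (x : Fin n → ℝ) : V.hw x * V.hw x = V.w x := by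
  unfold hw w; rw [← Real.exp_add]; congr 1; ring

theorem hw_hi (x : Fin n → ℝ) : V.hw x * V.hi x = 1 := by
  unfold hw hi; rw [← Real.exp_add, ← Real.exp_zero]; congr 1; ring

theorem hw_pos (x : Fin n → ℝ) : 0 < V.hw x := Real.exp_pos _

theorem c_w : Continuous V.w := by have := V.cW; unfold w; fun_prop
theorem c_hw : Continuous V.hw := by have := V.cW; unfold hw; fun_prop
theorem c_hi : Continuous V.hi := by have := V.cW; unfold hi; fun_prop

theorem b_hw (x : Fin n → ℝ) : |V.hw x| ≤ Real.exp (V.B / 2) := by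
  unfold hw
  rw [abs_of_pos (Real.exp_pos _), Real.exp_le_exp]
  have := abs_le.1 (V.bW x); linarith

theorem b_hi (x : Fin n → ℝ) : |V.hi x| ≤ Real.exp (V.B / 2) := by
  unfold hi
  rw [abs_of_pos (Real.exp_pos _), Real.exp_le_exp]
  have := abs_le.1 (V.bW x); linarith

theorem b_w (x : Fin n → ℝ) : |V.w x| ≤ Real.exp V.B := by
  unfold w
  rw [abs_of_pos (Real.exp_pos _), Real.exp_le_exp]
  have := abs_le.1 (V.bW x); linarith

theorem t_w : cfmTame V.w := cfmTame_bdd V.c_w _ V.b_w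
theorem t_hw : cfmTame V.hw := cfmTame_bdd V.c_hw _ V.b_hw
theorem t_hi : cfmTame V.hi := cfmTame_bdd V.c_hi _ V.b_hi
theorem t_W1 (i : Fin n) : cfmTame (V.W1 i) := cfmTame_bdd (V.cW1 i) _ (V.bW1 i)
theorem t_W2 (i j : Fin n) : cfmTame (V.W2 i j) := cfmTame_bdd (V.cW2 i j) _ (V.bW2 i j)

/-- weighted integration by parts -/
theorem ibp (i : Fin n) (F F' : (Fin n → ℝ) → ℝ)
    (hF : ∀ x, HasLineDerivAt ℝ F (F' x) x (Pi.single i 1)) (tF : cfmTame F) (tF' : cfmTame F') :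
    ∫ x, F' x * V.w x ∂(cfmG n) = ∫ x, (x i + V.W1 i x) * F x * V.w x ∂(cfmG n) := by
  have h := cfm_ibp i (fun x => F x * V.w x) (fun x => F' x * V.w x + F x * (V.w x * - V.W1 i x))
    (by
      intro x
      have h1 : HasLineDerivAt ℝ V.w (V.w x * - V.W1 i x) x (Pi.single i 1) := by
        have := (HasDerivAt.neg (V.dW i x)).exp
        unfold HasLineDerivAt
        convert! this using 1
        simp [w]
      have := HasDerivAt.mul (hF x) h1
      unfold HasLineDerivAt
      convert! this using 1
      simp)
    (tF.mul V.t_w).integrable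
    ((tF'.mul V.t_w).integrable.add
      (((tF.mul (V.t_w.mul (V.t_W1 i))).integrable.neg).congr
        (Filter.Eventually.of_forall fun x => by simp)))
    ((cfmTame_coord i).mul (tF.mul V.t_w)).integrable
  have a1 := (tF'.mul V.t_w).integrable
  have a2 := (tF.mul (V.t_w.mul (V.t_W1 i))).integrable
  have a3 := ((cfmTame_coord i).mul (tF.mul V.t_w)).integrable
  have e1 : ∫ x, (F' x * V.w x + F x * (V.w x * - V.W1 i x)) ∂(cfmG n)
      = ∫ x, F' x * V.w x ∂(cfmG n) - ∫ x, F x * (V.w x * V.W1 i x) ∂(cfmG n) := by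
    rw [← integral_sub a1 a2]
    congr 1; ext x; ring
  have e2 : ∫ x, (x i + V.W1 i x) * F x * V.w x ∂(cfmG n)
      = ∫ x, x i * (F x * V.w x) ∂(cfmG n) + ∫ x, F x * (V.w x * V.W1 i x) ∂(cfmG n) := by
    rw [← integral_add a3 a2]
    congr 1; ext x; ring
  rw [e1] at h
  rw [e2]; linarith

/-- minus the generator -/
noncomputable def N (p : MvPolynomial (Fin n) ℝ) (x : Fin n → ℝ) : ℝ :=
  ∑ i, ((x i + V.W1 i x) * cfmEv (MvPolynomial.pderiv i p) x
    - cfmEv (MvPolynomial.pderiv i (MvPolynomial.pderiv i p)) x)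

theorem t_N (p : MvPolynomial (Fin n) ℝ) : cfmTame (V.N p) := by
  unfold N
  exact cfmTame.sum fun i => (((cfmTame_coord i).add (V.t_W1 i)).mul (cfmTame_ev _)).sub
    (cfmTame_ev _)

theorem N_ibp (p : MvPolynomial (Fin n) ℝ) (G : (Fin n → ℝ) → ℝ) (G' : Fin n → (Fin n → ℝ) → ℝ)
    (hG : ∀ i x, HasLineDerivAt ℝ G (G' i x) x (Pi.single i 1)) (tG : cfmTame G)
    (tG' : ∀ i, cfmTame (G' i)) :
    ∫ x, V.N p x * G x * V.w x ∂(cfmG n) =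
      ∑ i, ∫ x, cfmEv (MvPolynomial.pderiv i p) x * G' i x * V.w x ∂(cfmG n) := by
  have key : ∀ i : Fin n, ∫ x, ((x i + V.W1 i x) * (cfmEv (MvPolynomial.pderiv i p) x * G x) * V.w x
      - cfmEv (MvPolynomial.pderiv i (MvPolynomial.pderiv i p)) x * G x * V.w x) ∂(cfmG n) =
      ∫ x, cfmEv (MvPolynomial.pderiv i p) x * G' i x * V.w x ∂(cfmG n) := by
    intro i
    have h := V.ibp i (fun x => cfmEv (MvPolynomial.pderiv i p) x * G x)
      (fun x => cfmEv (MvPolynomial.pderiv i (MvPolynomial.pderiv i p)) x * G x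
        + cfmEv (MvPolynomial.pderiv i p) x * G' i x)
      (by
        intro x
        have := HasDerivAt.mul (cfmEv_lineDeriv i (MvPolynomial.pderiv i p) x) (hG i x)
        unfold HasLineDerivAt
        convert! this using 1
        simp)
      ((cfmTame_ev _).mul tG)
      (((cfmTame_ev _).mul tG).add ((cfmTame_ev _).mul (tG' i)))
    have b1 := (((cfmTame_ev (MvPolynomial.pderiv i (MvPolynomial.pderiv i p))).mul tG).mul
      V.t_w).integrable
    have b2 := (((cfmTame_ev (MvPolynomial.pderiv i p)).mul (tG' i)).mul V.t_w).integrable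
    rw [integral_sub _ b1, ← h, ← integral_sub _ b1]
    · congr 1; ext x; ring
    · exact ((((cfmTame_ev _).mul tG).add ((cfmTame_ev _).mul (tG' i))).mul V.t_w).integrable
    · exact ((((cfmTame_coord i).add (V.t_W1 i)).mul ((cfmTame_ev _).mul tG)).mul V.t_w).integrable
  rw [← Finset.sum_congr rfl fun i _ => key i, ← integral_finsetSum]
  · congr 1; ext x
    unfold N
    rw [Finset.sum_mul, Finset.sum_mul]
    exact Finset.sum_congr rfl fun i _ => by ring
  · intro i _
    exact (((((cfmTame_coord i).add (V.t_W1 i)).mul ((cfmTame_ev _).mul tG)).mul V.t_w).sub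
      (((cfmTame_ev (MvPolynomial.pderiv i (MvPolynomial.pderiv i p))).mul tG).mul
      V.t_w)).integrable

theorem pderiv_comm (i j : Fin n) (p : MvPolynomial (Fin n) ℝ) :
    MvPolynomial.pderiv i (MvPolynomial.pderiv j p)
      = MvPolynomial.pderiv j (MvPolynomial.pderiv i p) := by
  induction p using MvPolynomial.induction_on with
  | C a => simp
  | add p q hp hq => simp [hp, hq]
  | mul_X p k hp =>
    simp only [MvPolynomial.pderiv_mul, map_add, hp, MvPolynomial.pderiv_X]
    have : ∀ a b : Fin n, (MvPolynomial.pderiv a)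
        ((Pi.single b (1 : MvPolynomial (Fin n) ℝ) : Fin n → MvPolynomial (Fin n) ℝ) k) = 0 := by
      intro a b
      by_cases h : k = b
      · subst h; simp
      · simp [Pi.single_eq_of_ne h]
    rw [this, this]; ring

theorem N_deriv (j : Fin n) (p : MvPolynomial (Fin n) ℝ) (x : Fin n → ℝ) :
    HasLineDerivAt ℝ (V.N p) (V.N (MvPolynomial.pderiv j p) x
      + (cfmEv (MvPolynomial.pderiv j p) x
        + ∑ i, V.W2 i j x * cfmEv (MvPolynomial.pderiv i p) x)) x (Pi.single j 1) := by
  have h : ∀ i, HasLineDerivAt ℝ (fun x => (x i + V.W1 i x) * cfmEv (MvPolynomial.pderiv i p) x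
    - cfmEv (MvPolynomial.pderiv i (MvPolynomial.pderiv i p)) x)
    (((if j = i then 1 else 0) + V.W2 i j x) * cfmEv (MvPolynomial.pderiv i p) x
      + (x i + V.W1 i x) * cfmEv (MvPolynomial.pderiv j (MvPolynomial.pderiv i p)) x
      - cfmEv (MvPolynomial.pderiv j (MvPolynomial.pderiv i (MvPolynomial.pderiv i p))) x) x
      (Pi.single j 1) := by
    intro i
    have := ((HasDerivAt.add (cfm_lineDeriv_coord j i x) (V.dW1 i j x)).mul
      (cfmEv_lineDeriv j (MvPolynomial.pderiv i p) x)).sub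
      (cfmEv_lineDeriv j (MvPolynomial.pderiv i (MvPolynomial.pderiv i p)) x)
    unfold HasLineDerivAt
    convert! this using 1
    simp
  have h2 := HasDerivAt.fun_sum (u := Finset.univ) fun i _ => h i
  unfold HasLineDerivAt N
  convert! h2 using 1
  have : cfmEv (MvPolynomial.pderiv j p) x =
      ∑ i, (if j = i then 1 else 0) * cfmEv (MvPolynomial.pderiv i p) x := by simp
  rw [this, ← Finset.sum_add_distrib, ← Finset.sum_add_distrib]
  refine Finset.sum_congr rfl fun i _ => ?_
  rw [pderiv_comm i j p, pderiv_comm i j (MvPolynomial.pderiv i p)]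
  ring

theorem intI (p q : MvPolynomial (Fin n) ℝ) :
    ∫ x, V.N p x * cfmEv q x * V.w x ∂(cfmG n) =
      ∑ i, ∫ x, cfmEv (MvPolynomial.pderiv i p) x * cfmEv (MvPolynomial.pderiv i q) x * V.w x
        ∂(cfmG n) :=
  V.N_ibp p _ _ (fun i x => cfmEv_lineDeriv i q x) (cfmTame_ev q) fun _ => cfmTame_ev _

theorem intB (p : MvPolynomial (Fin n) ℝ) :
    (∑ i, ∑ j, ∫ x, cfmEv (MvPolynomial.pderiv j (MvPolynomial.pderiv i p)) x *
      cfmEv (MvPolynomial.pderiv j (MvPolynomial.pderiv i p)) x * V.w x ∂(cfmG n))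
    + (1 - V.η) * ∑ i, ∫ x, cfmEv (MvPolynomial.pderiv i p) x *
      cfmEv (MvPolynomial.pderiv i p) x * V.w x ∂(cfmG n) ≤
    ∫ x, V.N p x * V.N p x * V.w x ∂(cfmG n) := by
  have h := V.N_ibp p (V.N p) _ (fun j x => V.N_deriv j p x) (V.t_N p)
    (fun j => (V.t_N _).add ((cfmTame_ev _).add
      (cfmTame.sum fun i => (V.t_W2 i j).mul (cfmTame_ev _))))
  rw [h]
  have i1 : ∀ j : Fin n, Integrable (fun x => cfmEv (MvPolynomial.pderiv j p) x *
      V.N (MvPolynomial.pderiv j p) x * V.w x) (cfmG n) := fun j =>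
    (((cfmTame_ev _).mul (V.t_N _)).mul V.t_w).integrable
  have i2 : ∀ j : Fin n, Integrable (fun x => cfmEv (MvPolynomial.pderiv j p) x *
      cfmEv (MvPolynomial.pderiv j p) x * V.w x) (cfmG n) := fun j =>
    (((cfmTame_ev _).mul (cfmTame_ev _)).mul V.t_w).integrable
  have i3 : ∀ j : Fin n, Integrable (fun x => cfmEv (MvPolynomial.pderiv j p) x *
      (∑ i, V.W2 i j x * cfmEv (MvPolynomial.pderiv i p) x) * V.w x) (cfmG n) := fun j =>
    (((cfmTame_ev _).mul (cfmTame.sum fun i => (V.t_W2 i j).mul (cfmTame_ev _))).mul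
      V.t_w).integrable
  have e : ∀ j, ∫ x, cfmEv (MvPolynomial.pderiv j p) x * (V.N (MvPolynomial.pderiv j p) x
      + (cfmEv (MvPolynomial.pderiv j p) x
        + ∑ i, V.W2 i j x * cfmEv (MvPolynomial.pderiv i p) x)) * V.w x ∂(cfmG n) =
      (∑ i, ∫ x, cfmEv (MvPolynomial.pderiv i (MvPolynomial.pderiv j p)) x *
        cfmEv (MvPolynomial.pderiv i (MvPolynomial.pderiv j p)) x * V.w x ∂(cfmG n))
      + (∫ x, cfmEv (MvPolynomial.pderiv j p) x *
      cfmEv (MvPolynomial.pderiv j p) x * V.w x ∂(cfmG n)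
      + ∫ x, cfmEv (MvPolynomial.pderiv j p) x *
      (∑ i, V.W2 i j x * cfmEv (MvPolynomial.pderiv i p) x) * V.w x ∂(cfmG n)) := by
    intro j
    rw [← V.intI, ← integral_add (i2 j) (i3 j), ← integral_add]
    · congr 1; ext x; ring
    · exact (((V.t_N _).mul (cfmTame_ev _)).mul V.t_w).integrable
    · exact (i2 j).add (i3 j)
  rw [Finset.sum_congr rfl fun j _ => e j, Finset.sum_add_distrib, Finset.sum_add_distrib]
  have hh : - V.η * ∑ i, ∫ x, cfmEv (MvPolynomial.pderiv i p) x *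
      cfmEv (MvPolynomial.pderiv i p) x * V.w x ∂(cfmG n) ≤
      ∑ j, ∫ x, cfmEv (MvPolynomial.pderiv j p) x *
      (∑ i, V.W2 i j x * cfmEv (MvPolynomial.pderiv i p) x) * V.w x ∂(cfmG n) := by
    rw [← integral_finsetSum _ fun i _ => i2 i, ← integral_finsetSum _ fun i _ => i3 i,
      ← integral_const_mul]
    refine integral_mono ((integrable_finsetSum _ fun i _ => i2 i).const_mul _)
      (integrable_finsetSum _ fun i _ => i3 i) fun x => ?_
    have := V.hess x fun i => cfmEv (MvPolynomial.pderiv i p) x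
    have hw : 0 ≤ V.w x := (Real.exp_pos _).le
    have := mul_le_mul_of_nonneg_right this hw
    simp only [Finset.mul_sum, Finset.sum_mul] at this ⊢
    calc _ = _ := Finset.sum_congr rfl fun i _ => by ring
      _ ≤ _ := this
      _ = _ := Finset.sum_congr rfl fun i _ => Finset.sum_congr rfl fun j _ => by ring
  linarith

end CfmW

/-! ### The concrete Hilbert space -/

theorem cfm_inner_toLp {n : ℕ} {f g : (Fin n → ℝ) → ℝ} (hf : MemLp f 2 (cfmG n))
    (hg : MemLp g 2 (cfmG n)) :
    inner ℝ (hf.toLp f) (hg.toLp g) = ∫ x, f x * g x ∂(cfmG n) := by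
  rw [L2.inner_def]
  apply integral_congr_ae
  filter_upwards [hf.coeFn_toLp, hg.coeFn_toLp] with x h1 h2
  rw [h1, h2]; simp [mul_comm]

theorem cfm_inner_toLp_right {n : ℕ} (f : Lp ℝ 2 (cfmG n)) {g : (Fin n → ℝ) → ℝ}
    (hg : MemLp g 2 (cfmG n)) :
    inner ℝ f (hg.toLp g) = ∫ x, f x * g x ∂(cfmG n) := by
  rw [L2.inner_def]
  apply integral_congr_ae
  filter_upwards [hg.coeFn_toLp] with x h2
  rw [h2]; simp [mul_comm]

/-- linear map into `L²` -/
noncomputable def cfmLin {n : ℕ} (T : MvPolynomial (Fin n) ℝ → (Fin n → ℝ) → ℝ)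
    (hT : ∀ p, MemLp (T p) 2 (cfmG n)) (ha : ∀ p q, T (p + q) = T p + T q)
    (hs : ∀ (c : ℝ) p, T (c • p) = c • T p) :
    MvPolynomial (Fin n) ℝ →ₗ[ℝ] Lp ℝ 2 (cfmG n) where
  toFun p := (hT p).toLp (T p)
  map_add' p q := by
    rw [← MemLp.toLp_add]; exact MemLp.toLp_congr _ _ (by rw [ha])
  map_smul' c p := by
    rw [RingHom.id_apply, ← MemLp.toLp_const_smul]; exact MemLp.toLp_congr _ _ (by rw [hs])

theorem cfmEv_add {n : ℕ} (p q : MvPolynomial (Fin n) ℝ) (x : Fin n → ℝ) :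
    cfmEv (p + q) x = cfmEv p x + cfmEv q x := by simp [cfmEv]

theorem cfmEv_smul {n : ℕ} (c : ℝ) (p : MvPolynomial (Fin n) ℝ) (x : Fin n → ℝ) :
    cfmEv (c • p) x = c * cfmEv p x := by simp [cfmEv]

namespace CfmW

variable {n : ℕ} (V : CfmW n)

theorem N_add (p q : MvPolynomial (Fin n) ℝ) (x : Fin n → ℝ) :
    V.N (p + q) x = V.N p x + V.N q x := by
  unfold N
  rw [← Finset.sum_add_distrib]
  refine Finset.sum_congr rfl fun i _ => ?_
  simp only [map_add, cfmEv_add]; ring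

theorem N_smul (c : ℝ) (p : MvPolynomial (Fin n) ℝ) (x : Fin n → ℝ) :
    V.N (c • p) x = c * V.N p x := by
  unfold N
  rw [Finset.mul_sum]
  refine Finset.sum_congr rfl fun i _ => ?_
  rw [Derivation.map_smul, Derivation.map_smul, cfmEv_smul, cfmEv_smul]; ring

/-- `p ↦ p e^{-W/2}` -/
noncomputable def io : MvPolynomial (Fin n) ℝ →ₗ[ℝ] Lp ℝ 2 (cfmG n) :=
  cfmLin (fun p x => cfmEv p x * V.hw x) (fun p => ((cfmTame_ev p).mul V.t_hw).memLp)
    (fun p q => by ext x; simp [cfmEv_add]; ring) (fun c p => by ext x; simp [cfmEv_smul]; ring)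

/-- `p ↦ p e^{W/2}` -/
noncomputable def ps : MvPolynomial (Fin n) ℝ →ₗ[ℝ] Lp ℝ 2 (cfmG n) :=
  cfmLin (fun p x => cfmEv p x * V.hi x) (fun p => ((cfmTame_ev p).mul V.t_hi).memLp)
    (fun p q => by ext x; simp [cfmEv_add]; ring) (fun c p => by ext x; simp [cfmEv_smul]; ring)

/-- `p ↦ (N p) e^{-W/2}` -/
noncomputable def la : MvPolynomial (Fin n) ℝ →ₗ[ℝ] Lp ℝ 2 (cfmG n) :=
  cfmLin (fun p x => V.N p x * V.hw x) (fun p => ((V.t_N p).mul V.t_hw).memLp)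
    (fun p q => by ext x; simp [N_add]; ring) (fun c p => by ext x; simp [N_smul]; ring)

theorem io_io (p q : MvPolynomial (Fin n) ℝ) :
    inner ℝ (V.io p) (V.io q) = ∫ x, cfmEv p x * cfmEv q x * V.w x ∂(cfmG n) := by
  refine (cfm_inner_toLp ((cfmTame_ev p).mul V.t_hw).memLp ((cfmTame_ev q).mul V.t_hw).memLp).trans ?_
  congr 1; ext x; rw [← V.hw_sq]; ring

theorem io_ps (p q : MvPolynomial (Fin n) ℝ) :
    inner ℝ (V.io p) (V.ps q) = ∫ x, cfmEv p x * cfmEv q x ∂(cfmG n) := by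
  refine (cfm_inner_toLp ((cfmTame_ev p).mul V.t_hw).memLp ((cfmTame_ev q).mul V.t_hi).memLp).trans ?_
  congr 1; ext x
  linear_combination cfmEv p x * cfmEv q x * V.hw_hi x

theorem la_io (p q : MvPolynomial (Fin n) ℝ) :
    inner ℝ (V.la p) (V.io q) = ∫ x, V.N p x * cfmEv q x * V.w x ∂(cfmG n) := by
  refine (cfm_inner_toLp ((V.t_N p).mul V.t_hw).memLp ((cfmTame_ev q).mul V.t_hw).memLp).trans ?_
  congr 1; ext x; rw [← V.hw_sq]; ring

theorem la_la (p q : MvPolynomial (Fin n) ℝ) :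
    inner ℝ (V.la p) (V.la q) = ∫ x, V.N p x * V.N q x * V.w x ∂(cfmG n) := by
  refine (cfm_inner_toLp ((V.t_N p).mul V.t_hw).memLp ((V.t_N q).mul V.t_hw).memLp).trans ?_
  congr 1; ext x; rw [← V.hw_sq]; ring

theorem r_io (g : Lp ℝ 2 (cfmG n)) (q : MvPolynomial (Fin n) ℝ) :
    inner ℝ g (V.io q) = ∫ x, g x * (cfmEv q x * V.hw x) ∂(cfmG n) :=
  cfm_inner_toLp_right _ ((cfmTame_ev q).mul V.t_hw).memLp

theorem r_la (g : Lp ℝ 2 (cfmG n)) (q : MvPolynomial (Fin n) ℝ) :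
    inner ℝ g (V.la q) = ∫ x, g x * (V.N q x * V.hw x) ∂(cfmG n) :=
  cfm_inner_toLp_right _ ((V.t_N q).mul V.t_hw).memLp

theorem r_ps (g : Lp ℝ 2 (cfmG n)) (q : MvPolynomial (Fin n) ℝ) :
    inner ℝ g (V.ps q) = ∫ x, g x * (cfmEv q x * V.hi x) ∂(cfmG n) :=
  cfm_inner_toLp_right _ ((cfmTame_ev q).mul V.t_hi).memLp

/-- derivative as linear map -/
noncomputable def D (i : Fin n) : MvPolynomial (Fin n) ℝ →ₗ[ℝ] MvPolynomial (Fin n) ℝ :=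
  (MvPolynomial.pderiv i).toLinearMap

theorem D_apply (i : Fin n) (p : MvPolynomial (Fin n) ℝ) : D i p = MvPolynomial.pderiv i p := rfl

theorem hI (p q : MvPolynomial (Fin n) ℝ) :
    inner ℝ (V.la p) (V.io q) = ∑ i, inner ℝ (V.io (D i p)) (V.io (D i q)) := by
  rw [la_io, intI]
  exact Finset.sum_congr rfl fun i _ => (V.io_io _ _).symm

theorem hB (p : MvPolynomial (Fin n) ℝ) :
    (∑ i, ∑ j, ‖V.io (D j (D i p))‖ ^ 2) + (1 - V.η) * ∑ i, ‖V.io (D i p)‖ ^ 2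
      ≤ ‖V.la p‖ ^ 2 := by
  simp only [← real_inner_self_eq_norm_sq, io_io, la_la, D_apply]
  exact V.intB p

/-- the Ornstein-Uhlenbeck operator on polynomials -/
noncomputable def N0 : MvPolynomial (Fin n) ℝ →ₗ[ℝ] MvPolynomial (Fin n) ℝ :=
  ∑ i, ((LinearMap.mulLeft ℝ (MvPolynomial.X i)).comp (D i) - (D i).comp (D i))

theorem N0_apply (p : MvPolynomial (Fin n) ℝ) :
    N0 p = ∑ i, (MvPolynomial.X i * MvPolynomial.pderiv i p
      - MvPolynomial.pderiv i (MvPolynomial.pderiv i p)) := by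
  simp [N0, D_apply]

theorem N0_ev (p : MvPolynomial (Fin n) ℝ) (x : Fin n → ℝ) :
    cfmEv (N0 p) x = (CfmW.zero n).N p x := by
  rw [N0_apply]
  simp [cfmEv, N, zero]

theorem N_eq (p : MvPolynomial (Fin n) ℝ) (x : Fin n → ℝ) :
    V.N p x = cfmEv (N0 p) x + ∑ i, V.W1 i x * cfmEv (MvPolynomial.pderiv i p) x := by
  rw [N0_ev]
  unfold N
  rw [← Finset.sum_add_distrib]
  refine Finset.sum_congr rfl fun i _ => ?_
  simp [zero]; ring

/-- solvability up to constants -/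
theorem solve {l : ℝ} (hl : 0 ≤ l) (p : MvPolynomial (Fin n) ℝ) :
    ∃ (q : MvPolynomial (Fin n) ℝ) (c : ℝ), p = l • q + N0 q + MvPolynomial.C c := by
  let S : Submodule ℝ (MvPolynomial (Fin n) ℝ) :=
    LinearMap.range ((l • LinearMap.id + N0).coprod
      (Algebra.linearMap ℝ (MvPolynomial (Fin n) ℝ)))
  have hS : ∀ p, p ∈ S ↔ ∃ (q : MvPolynomial (Fin n) ℝ) (c : ℝ),
      p = l • q + N0 q + MvPolynomial.C c := by
    intro p
    simp only [S, LinearMap.mem_range, Prod.exists, LinearMap.coprod_apply, LinearMap.add_apply,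
      LinearMap.smul_apply, LinearMap.id_apply, Algebra.linearMap_apply,
      MvPolynomial.algebraMap_eq, eq_comm]
  rw [← hS]
  have key : ∀ (d : ℕ) (s : Fin n →₀ ℕ) (c : ℝ), s.degree = d → MvPolynomial.monomial s c ∈ S := by
    intro d
    induction d using Nat.strong_induction_on with
    | _ d ih =>
      intro s c hs
      by_cases h0 : d = 0
      · rw [h0, Finsupp.degree_eq_zero_iff] at hs
        rw [hS]
        refine ⟨0, c, ?_⟩
        rw [hs]; simp
      have h1 : N0 (MvPolynomial.monomial s c) = (d : ℝ) • MvPolynomial.monomial s c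
          - ∑ i, MvPolynomial.pderiv i (MvPolynomial.pderiv i (MvPolynomial.monomial s c)) := by
        rw [N0_apply, Finset.sum_sub_distrib]
        congr 1
        rw [← hs, Finsupp.degree_eq_sum, Nat.cast_sum, Finset.sum_smul]
        refine Finset.sum_congr rfl fun i _ => ?_
        rw [MvPolynomial.X_mul_pderiv_monomial, Nat.cast_smul_eq_nsmul]
      have h2 : ∑ i, MvPolynomial.pderiv i (MvPolynomial.pderiv i (MvPolynomial.monomial s c))
          ∈ S := by
        refine Submodule.sum_mem _ fun i _ => ?_
        rw [MvPolynomial.pderiv_monomial, MvPolynomial.pderiv_monomial]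
        by_cases hi : s i = 0
        · simp [hi]
        refine ih _ ?_ _ _ rfl
        have a1 : (s - Finsupp.single i 1).degree + 1 = s.degree := by
          have hle : Finsupp.single i 1 ≤ s := by
            rw [Finsupp.single_le_iff]; omega
          conv_rhs => rw [← tsub_add_cancel_of_le hle]
          rw [map_add, Finsupp.degree_single]
        have a2 : (s - Finsupp.single i 1 - Finsupp.single i 1).degree
            ≤ (s - Finsupp.single i 1).degree :=
          Finsupp.degree_mono tsub_le_self
        omega
      have h3 : l • MvPolynomial.monomial s c + N0 (MvPolynomial.monomial s c) ∈ S := by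
        rw [hS]; exact ⟨MvPolynomial.monomial s c, 0, by simp only [map_zero, add_zero]⟩
      have h4 : (l + d) • MvPolynomial.monomial s c ∈ S := by
        have := S.add_mem h3 h2
        rw [h1] at this
        convert this using 1
        module
      have hne : l + d ≠ 0 := by
        have : (0 : ℝ) < d := by exact_mod_cast Nat.pos_of_ne_zero h0
        positivity
      have := S.smul_mem (l + d)⁻¹ h4
      rwa [smul_smul, inv_mul_cancel₀ hne, one_smul] at this
  rw [MvPolynomial.as_sum p]
  exact Submodule.sum_mem _ fun s _ => key _ s _ rfl

theorem solve_pos {l : ℝ} (hl : 0 < l) (p : MvPolynomial (Fin n) ℝ) :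
    ∃ q : MvPolynomial (Fin n) ℝ, p = l • q + N0 q := by
  obtain ⟨q, c, h⟩ := solve hl.le p
  refine ⟨q + MvPolynomial.C (c / l), ?_⟩
  have : N0 (MvPolynomial.C (c / l) : MvPolynomial (Fin n) ℝ) = 0 := by simp [N0_apply]
  rw [map_add, this, smul_add, h, MvPolynomial.smul_eq_C_mul (MvPolynomial.C _), ← map_mul,
    mul_div_cancel₀ _ hl.ne']
  ring

theorem zero_w (x : Fin n → ℝ) : (CfmW.zero n).w x = 1 := by simp [w, zero]
theorem zero_hw (x : Fin n → ℝ) : (CfmW.zero n).hw x = 1 := by simp [hw, zero]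

theorem poly_dense (f : Lp ℝ 2 (cfmG n)) {ε : ℝ} (hε : 0 < ε) :
    ∃ p, ‖f - (CfmW.zero n).io p‖ < ε := by
  apply cfm_dense_of_orth _ _ f hε
  intro g hg
  have := cfm_poly_complete g (Lp.memLp g) (fun p => by
    have := hg p
    rw [r_io] at this
    simpa [zero_hw] using this)
  exact Lp.ext (this.trans (Lp.coeFn_zero _ _ _).symm)

/-- uniqueness for large `l` -/
theorem resolvent {l : ℝ} (hl : 0 < l) (hl2 : n * V.B ^ 2 ≤ l) (g : Lp ℝ 2 (cfmG n))
    (hg : ∀ p, ∫ x, g x * (l * cfmEv p x + V.N p x) ∂(cfmG n) = 0) : g = 0 := by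
  have main : ∀ ε > 0, ‖g‖ ^ 2 ≤ 0 + 2 * ε ^ 2 := by
    intro ε hε
    obtain ⟨r, hr⟩ := poly_dense g hε
    obtain ⟨p, rfl⟩ := solve_pos hl r
    set Z := CfmW.zero n with hZ
    set u := Z.io (l • p + N0 p) with hu
    -- gradient bound
    have g1 : ∑ i, ‖Z.io (D i p)‖ ^ 2 ≤ ‖u‖ ^ 2 / (4 * l) := by
      have h1 := Z.hI p p
      have h2 : Z.la p = u - l • Z.io p := by
        rw [hu, map_add, map_smul, add_sub_cancel_left]
        refine MemLp.toLp_congr ((Z.t_N p).mul Z.t_hw).memLp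
          ((cfmTame_ev (N0 p)).mul Z.t_hw).memLp (Filter.Eventually.of_forall fun x => ?_)
        simp only [N0_ev, hZ]
      simp only [real_inner_self_eq_norm_sq] at h1
      rw [← h1, h2, inner_sub_left, inner_smul_left, real_inner_self_eq_norm_sq]
      have h3 := real_inner_le_norm u (Z.io p)
      have : ‖u‖ ^ 2 / (4 * l) - (‖u‖ * ‖Z.io p‖ - l * ‖Z.io p‖ ^ 2)
        = (‖u‖ - 2 * l * ‖Z.io p‖) ^ 2 / (4 * l) := by field_simp; ring
      have h4 : 0 ≤ (‖u‖ - 2 * l * ‖Z.io p‖) ^ 2 / (4 * l) := by positivity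
      simp; linarith
    -- orthogonality
    let q : (Fin n → ℝ) → ℝ := fun x => ∑ i, V.W1 i x * cfmEv (MvPolynomial.pderiv i p) x
    have tq : cfmTame q := cfmTame.sum fun i => (V.t_W1 i).mul (cfmTame_ev _)
    have g2 : inner ℝ g u = - inner ℝ g (tq.memLp.toLp q) := by
      rw [hu, r_io, cfm_inner_toLp_right, ← integral_neg]
      have h0 := hg p
      rw [← sub_eq_zero, ← integral_sub, ← h0]
      · congr 1; ext x
        rw [V.N_eq, cfmEv_add, cfmEv_smul, hZ, zero_hw]
        simp only [q]; ring
      · exact (Lp.memLp g).integrable_mul ((cfmTame_ev _).mul Z.t_hw).memLp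
      · exact ((Lp.memLp g).integrable_mul tq.memLp).neg
    have g3 : ‖tq.memLp.toLp q‖ ^ 2 ≤ n * V.B ^ 2 * ∑ i, ‖Z.io (D i p)‖ ^ 2 := by
      simp only [← real_inner_self_eq_norm_sq, io_io, D_apply, cfm_inner_toLp]
      rw [← integral_finsetSum, ← integral_const_mul]
      · refine integral_mono (tq.mul tq).integrable ?_ fun x => ?_
        · exact (cfmTame.sum fun i => ((cfmTame_ev _).mul (cfmTame_ev _)).mul Z.t_w).integrable.const_mul _
        · simp only [q, hZ, zero_w, mul_one]
          have c1 := Finset.sum_mul_sq_le_sq_mul_sq Finset.univ (fun i => V.W1 i x)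
            fun i => cfmEv (MvPolynomial.pderiv i p) x
          have c2 : ∑ i, V.W1 i x ^ 2 ≤ n * V.B ^ 2 := by
            calc _ ≤ ∑ _i : Fin n, V.B ^ 2 := Finset.sum_le_sum fun i _ =>
                  sq_le_sq' (abs_le.1 (V.bW1 i x)).1 (abs_le.1 (V.bW1 i x)).2
              _ = _ := by simp
          simp only [← pow_two]
          refine c1.trans ?_
          gcongr
      · intro i _
        exact (((cfmTame_ev _).mul (cfmTame_ev _)).mul Z.t_w).integrable
    have g4 : ‖tq.memLp.toLp q‖ ^ 2 ≤ ‖u‖ ^ 2 / 4 := by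
      refine g3.trans ?_
      calc _ ≤ l * (‖u‖ ^ 2 / (4 * l)) := by gcongr
        _ = _ := by field_simp
    have g5 := norm_sub_sq_real g u
    have g6 : ‖g - u‖ ^ 2 ≤ ε ^ 2 := by gcongr
    have g7 := neg_le_of_abs_le (abs_real_inner_le_norm g (tq.memLp.toLp q))
    have g8 : ‖g‖ * ‖tq.memLp.toLp q‖ ≤ ‖g‖ ^ 2 / 4 + ‖tq.memLp.toLp q‖ ^ 2 := by
      nlinarith [sq_nonneg (‖g‖ / 2 - ‖tq.memLp.toLp q‖)]
    rw [g2] at g5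
    nlinarith [sq_nonneg ‖u‖]
  have : ‖g‖ ^ 2 ≤ 0 := by
    apply le_of_forall_pos_le_add
    intro ε hε
    have := main √(ε / 2) (by positivity)
    rw [Real.sq_sqrt (by positivity)] at this
    linarith
  have : ‖g‖ = 0 := by nlinarith [norm_nonneg g]
  exact norm_eq_zero.1 this

theorem memLp_mul_bdd {f h : (Fin n → ℝ) → ℝ} (hf : MemLp f 2 (cfmG n)) (hh : Continuous h)
    (C : ℝ) (hC : ∀ x, |h x| ≤ C) : MemLp (fun x => f x * h x) 2 (cfmG n) := by
  refine hf.of_le_mul (c := C) (hf.1.mul hh.aestronglyMeasurable)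
    (Filter.Eventually.of_forall fun x => ?_)
  rw [norm_mul, mul_comm, Real.norm_eq_abs (h x)]
  gcongr
  exact hC x

theorem resolvent_dense {l : ℝ} (hl : 0 < l) (hl2 : n * V.B ^ 2 ≤ l) (f : Lp ℝ 2 (cfmG n))
    {ε : ℝ} (hε : 0 < ε) : ∃ p, ‖f - (l • V.io p + V.la p)‖ < ε := by
  apply cfm_dense_of_orth (l • V.io + V.la) _ f hε
  intro g hg
  have m := memLp_mul_bdd (Lp.memLp g) V.c_hw _ V.b_hw
  have h0 := V.resolvent hl hl2 (m.toLp _) (by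
    intro p
    have := hg p
    rw [LinearMap.add_apply, LinearMap.smul_apply, inner_add_right, inner_smul_right, r_io, r_la,
      ← integral_const_mul, ← integral_add] at this
    · rw [← this]
      apply integral_congr_ae
      filter_upwards [m.coeFn_toLp] with x hx
      rw [hx]; ring
    · exact ((Lp.memLp g).integrable_mul ((cfmTame_ev _).mul V.t_hw).memLp).const_mul _
    · exact ((Lp.memLp g).integrable_mul ((V.t_N _).mul V.t_hw).memLp))
  have h1 : (fun x => g x * V.hw x) =ᵐ[cfmG n] 0 := by
    have := m.coeFn_toLp
    rw [h0] at this
    exact this.symm.trans (Lp.coeFn_zero _ _ _)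
  refine Lp.ext (Filter.EventuallyEq.trans ?_ (Lp.coeFn_zero _ _ _).symm)
  filter_upwards [h1] with x hx
  simpa [(V.hw_pos x).ne'] using hx

theorem kernel_ibp (g : Lp ℝ 2 (cfmG n)) (hg : ∀ p, inner ℝ g (V.la p) = 0) (i : Fin n)
    (q : MvPolynomial (Fin n) ℝ) :
    inner ℝ g (V.ps (MvPolynomial.X i * q - MvPolynomial.pderiv i q)) = 0 := by
  set h := MvPolynomial.X i * q - MvPolynomial.pderiv i q with hh
  set l : ℝ := n * V.B ^ 2 + 1 with hl
  have hl0 : 1 ≤ l := by rw [hl]; have : 0 ≤ n * V.B ^ 2 := by positivity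
                         linarith
  have adj : ∀ p, inner ℝ (V.io p) (V.ps h) = inner ℝ (V.io (D i p)) (V.ps q) := by
    intro p
    rw [io_ps, io_ps, D_apply]
    have := (CfmW.zero n).ibp i (fun x => cfmEv p x * cfmEv q x)
      (fun x => cfmEv (MvPolynomial.pderiv i p) x * cfmEv q x
        + cfmEv p x * cfmEv (MvPolynomial.pderiv i q) x)
      (by
        intro x
        have := HasDerivAt.mul (cfmEv_lineDeriv i p x) (cfmEv_lineDeriv i q x)
        unfold HasLineDerivAt
        convert! this using 1
        simp)
      ((cfmTame_ev _).mul (cfmTame_ev _))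
      (((cfmTame_ev _).mul (cfmTame_ev _)).add ((cfmTame_ev _).mul (cfmTame_ev _)))
    simp only [zero_w, mul_one] at this
    rw [integral_add ((cfmTame_ev _).mul (cfmTame_ev _)).integrable
      ((cfmTame_ev _).mul (cfmTame_ev _)).integrable] at this
    rw [← eq_sub_iff_add_eq, ← integral_sub] at this
    · rw [this]
      congr 1; ext x
      simp only [hh, cfmEv, zero, map_sub, map_mul, MvPolynomial.eval_X]; ring
    · exact ((((cfmTame_coord i).add ((CfmW.zero n).t_W1 i))).mul
        ((cfmTame_ev p).mul (cfmTame_ev q))).integrable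
    · exact ((cfmTame_ev _).mul (cfmTame_ev _)).integrable
  have main : ∀ ε > 0, |inner ℝ g (V.ps h)| ≤ 0 + ε * (‖V.ps h‖ + ‖V.ps q‖) := by
    intro ε hε
    obtain ⟨p, hp⟩ := V.resolvent_dense (l := l) (by linarith) (by rw [hl]; linarith) (l • g) hε
    have k := cfm_kernel V.io D V.la V.hI g hg (l := l) (by linarith) p
    have k1 : l / 2 * ‖V.io p - g‖ ^ 2 + ∑ i, ‖V.io (D i p)‖ ^ 2 ≤ ε ^ 2 / 2 := by
      refine k.trans ?_
      have : ‖l • g - (l • V.io p + V.la p)‖ ^ 2 ≤ ε ^ 2 := by gcongr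
      gcongr
      linarith
    have k2 : ‖V.io (D i p)‖ ^ 2 ≤ ∑ i, ‖V.io (D i p)‖ ^ 2 :=
      Finset.single_le_sum (f := fun i => ‖V.io (D i p)‖ ^ 2) (fun _ _ => by positivity)
        (Finset.mem_univ i)
    have k3 : ‖V.io p - g‖ ≤ ε := by
      apply le_of_sq_le_sq _ hε.le
      nlinarith [sq_nonneg ‖V.io p - g‖, sq_nonneg ‖V.io (D i p)‖]
    have k4 : ‖V.io (D i p)‖ ≤ ε := by
      apply le_of_sq_le_sq _ hε.le
      nlinarith [sq_nonneg ‖V.io p - g‖, sq_nonneg ‖V.io (D i p)‖]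
    have k5 : inner ℝ g (V.ps h) = - inner ℝ (V.io p - g) (V.ps h)
        + inner ℝ (V.io (D i p)) (V.ps q) := by
      rw [← adj, inner_sub_left]; ring
    have k6 := abs_real_inner_le_norm (V.io p - g) (V.ps h)
    have k7 := abs_real_inner_le_norm (V.io (D i p)) (V.ps q)
    rw [k5]
    refine (abs_add_le _ _).trans ?_
    rw [abs_neg]
    have k8 : ‖V.io p - g‖ * ‖V.ps h‖ ≤ ε * ‖V.ps h‖ := by gcongr
    have k9 : ‖V.io (D i p)‖ * ‖V.ps q‖ ≤ ε * ‖V.ps q‖ := by gcongr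
    linarith
  have : |inner ℝ g (V.ps h)| ≤ 0 := by
    apply le_of_forall_pos_le_add
    intro ε hε
    have hc : 0 < ‖V.ps h‖ + ‖V.ps q‖ + 1 := by positivity
    have := main (ε / (‖V.ps h‖ + ‖V.ps q‖ + 1)) (by positivity)
    refine this.trans ?_
    rw [div_mul_eq_mul_div]
    gcongr
    rw [div_le_iff₀ hc]
    exact mul_le_mul_of_nonneg_left (by linarith) hε.le
  exact abs_nonpos_iff.1 this

theorem kernel_zero (g : Lp ℝ 2 (cfmG n)) (hg : ∀ p, inner ℝ g (V.la p) = 0)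
    (h1 : inner ℝ g (V.io 1) = 0) : g = 0 := by
  have hN : ∀ q, inner ℝ g (V.ps (N0 q)) = 0 := by
    intro q
    rw [N0_apply, map_sum, inner_sum]
    exact Finset.sum_eq_zero fun i _ => V.kernel_ibp g hg i _
  have hN0 : ∀ q : MvPolynomial (Fin n) ℝ, ∫ x, cfmEv (N0 q) x ∂(cfmG n) = 0 := by
    intro q
    have := (CfmW.zero n).intI q 1
    simp only [← N0_ev, zero_w] at this
    simpa [cfmEv] using this
  set a := inner ℝ g (V.ps 1) with ha
  have hC : ∀ c : ℝ, (MvPolynomial.C c : MvPolynomial (Fin n) ℝ) = c • 1 := by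
    intro c; rw [MvPolynomial.smul_eq_C_mul, mul_one]
  have hp : ∀ p, inner ℝ g (V.ps p) = a * ∫ x, cfmEv p x ∂(cfmG n) := by
    intro p
    obtain ⟨q, c, rfl⟩ := solve le_rfl p
    rw [zero_smul, zero_add, map_add, inner_add_right, hN, hC, map_smul, inner_smul_right]
    simp only [cfmEv_add, cfmEv_smul]
    rw [integral_add (cfmEv_integrable _) ((cfmEv_integrable _).const_mul _), hN0]
    simp [cfmEv, ha, mul_comm]
  have m := memLp_mul_bdd (Lp.memLp g) V.c_hi _ V.b_hi
  have mc := m.sub (memLp_const a)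
  have := cfm_poly_complete _ mc (by
    intro p
    have := hp p
    rw [r_ps, ← integral_const_mul, ← sub_eq_zero, ← integral_sub] at this
    · rw [← this]
      congr 1; ext x; simp only [Pi.sub_apply]; ring
    · exact (Lp.memLp g).integrable_mul ((cfmTame_ev p).mul V.t_hi).memLp
    · exact (cfmEv_integrable p).const_mul _)
  have hga : ∀ᵐ x ∂(cfmG n), g x = a * V.hw x := by
    filter_upwards [this] with x hx
    simp only [Pi.sub_apply, Pi.zero_apply] at hx
    have := V.hw_hi x
    linear_combination V.hw x * hx - g x * this
  have ha0 : a = 0 := by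
    rw [r_io] at h1
    have e : ∫ x, g x * (cfmEv 1 x * V.hw x) ∂(cfmG n) = a * ∫ x, V.w x ∂(cfmG n) := by
      rw [← integral_const_mul]
      apply integral_congr_ae
      filter_upwards [hga] with x hx
      rw [hx, ← V.hw_sq]; simp [cfmEv]; ring
    rw [e] at h1
    have hpos : 0 < ∫ x, V.w x ∂(cfmG n) := integral_exp_pos V.t_w.integrable
    simpa [hpos.ne'] using h1
  refine Lp.ext (Filter.EventuallyEq.trans ?_ (Lp.coeFn_zero _ _ _).symm)
  filter_upwards [hga] with x hx
  rw [hx, ha0]; simp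

/-- weighted version of the inequality -/
theorem weighted (hη : V.η < 1) :
    ∫ x, (∑ i, x i ^ 2) ^ 2 * V.w x ∂(cfmG n)
      - (∫ x, (∑ i, x i ^ 2) * V.w x ∂(cfmG n)) ^ 2 / ∫ x, V.w x ∂(cfmG n) ≤
      4 * (∫ x, (∑ i, x i ^ 2) * V.w x ∂(cfmG n)) / (2 * (1 - V.η)) +
      (∑ i, (2 * ∫ x, x i * V.w x ∂(cfmG n)) ^ 2) / ((1 - V.η) * ∫ x, V.w x ∂(cfmG n)) := by
  have hpos : 0 < ∫ x, V.w x ∂(cfmG n) := integral_exp_pos V.t_w.integrable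
  have hone : ‖V.io 1‖ ^ 2 = ∫ x, V.w x ∂(cfmG n) := by
    rw [← real_inner_self_eq_norm_sq, io_io]; simp [cfmEv]
  have hone' : ∀ p, inner ℝ (V.la p) (V.io 1) = 0 := by
    intro p; rw [hI]; simp [D_apply]
  have := cfm_second V.io D V.la V.hI (κ := 1 - V.η) (by linarith) V.hB 1
    (by intro i; simp [D_apply]) (by rw [hone]; exact hpos)
    (fun f hf ε hε => cfm_dense_of_orth_one V.la (V.io 1) hone' V.kernel_zero f hf hε)
    (∑ i, MvPolynomial.X i ^ 2)
  have hD : ∀ i : Fin n, D i (∑ j, MvPolynomial.X j ^ 2) = (2 : ℝ) • MvPolynomial.X i := by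
    intro i
    rw [D_apply, map_sum]
    simp only [MvPolynomial.pderiv_pow, MvPolynomial.pderiv_X]
    rw [Finset.sum_eq_single i]
    · have : (MvPolynomial.C 2 : MvPolynomial (Fin n) ℝ) = 2 := map_ofNat _ 2
      simp [MvPolynomial.smul_eq_C_mul, this]
    · intro j _ hj
      simp [Pi.single_eq_of_ne hj]
    · simp
  rw [hone] at this
  simp only [hD, map_smul, norm_smul, mul_pow, inner_smul_left] at this
  simp only [← real_inner_self_eq_norm_sq, io_io, ← Finset.mul_sum] at this
  rw [← integral_finsetSum] at this
  · convert this using 1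
    · simp [cfmEv, pow_two]
    · congr 1
      · congr 1
        congr 1
        · norm_num
        · congr 1; ext x
          simp [cfmEv, Finset.sum_mul, pow_two]
      · simp [cfmEv, mul_pow, Finset.mul_sum]
  · intro i _
    exact (((cfmTame_ev _).mul (cfmTame_ev _)).mul V.t_w).integrable

end CfmW

/-! ### Construction of the potentials -/

/-- smooth positive part -/
noncomputable def cfmU (t : ℝ) : ℝ := √(1 + t ^ 2) + t

theorem cfmU_abs_lt (t : ℝ) : |t| < √(1 + t ^ 2) := by
  rw [← Real.sqrt_sq_eq_abs]
  exact Real.sqrt_lt_sqrt (by positivity) (by linarith)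

theorem cfmU_pos (t : ℝ) : 0 < cfmU t := by
  unfold cfmU
  linarith [cfmU_abs_lt t, neg_abs_le t]

theorem cfmU_ge (t : ℝ) : t ≤ cfmU t := by
  unfold cfmU
  linarith [Real.sqrt_nonneg (1 + t ^ 2)]

theorem cfmU_le {t T : ℝ} (hT : 0 < T) (h : t ≤ - T) : cfmU t ≤ 1 / T := by
  have h1 : cfmU t * (√(1 + t ^ 2) - t) = 1 := by
    unfold cfmU
    have := Real.sq_sqrt (show 0 ≤ 1 + t ^ 2 by positivity)
    linear_combination this
  have h2 := Real.sqrt_nonneg (1 + t ^ 2)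
  rw [le_div_iff₀ hT]
  nlinarith [cfmU_pos t]

/-- first derivative -/
noncomputable def cfmU1 (t : ℝ) : ℝ := 1 + t / √(1 + t ^ 2)

/-- second derivative -/
noncomputable def cfmU2 (t : ℝ) : ℝ := 1 / (√(1 + t ^ 2)) ^ 3

theorem cfm_sqrt_deriv (t : ℝ) : HasDerivAt (fun t : ℝ => √(1 + t ^ 2)) (t / √(1 + t ^ 2)) t := by
  have h : HasDerivAt (fun t : ℝ => 1 + t ^ 2) (2 * t) t := by
    simpa using (hasDerivAt_pow 2 t).const_add 1
  have := h.sqrt (by positivity)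
  convert! this using 1
  rw [mul_div_mul_left _ _ two_ne_zero]

theorem cfm_sqrt_ge (t : ℝ) : 1 ≤ √(1 + t ^ 2) := by
  rw [Real.one_le_sqrt]; nlinarith [sq_nonneg t]

theorem cfmU_deriv (t : ℝ) : HasDerivAt cfmU (cfmU1 t) t := by
  have := (cfm_sqrt_deriv t).add (hasDerivAt_id t)
  unfold cfmU cfmU1
  convert! this using 1
  ring

theorem cfmU1_deriv (t : ℝ) : HasDerivAt cfmU1 (cfmU2 t) t := by
  have hs : √(1 + t ^ 2) ≠ 0 := by linarith [cfm_sqrt_ge t]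
  have := ((hasDerivAt_id t).div (cfm_sqrt_deriv t) hs).const_add 1
  unfold cfmU1 cfmU2
  convert! this using 1
  have h2 := Real.sq_sqrt (show 0 ≤ 1 + t ^ 2 by positivity)
  simp only [id]
  field_simp
  rw [h2]; ring

theorem cfmU1_bd (t : ℝ) : 0 ≤ cfmU1 t ∧ cfmU1 t ≤ 2 := by
  have h := cfmU_abs_lt t
  have hs : 0 < √(1 + t ^ 2) := by linarith [cfm_sqrt_ge t]
  have h1 : |t / √(1 + t ^ 2)| ≤ 1 := by
    rw [abs_div, abs_of_pos hs, div_le_one hs]; exact h.le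
  have := abs_le.1 h1
  unfold cfmU1
  constructor <;> linarith

theorem cfmU2_bd (t : ℝ) : 0 ≤ cfmU2 t ∧ cfmU2 t ≤ 1 := by
  have hs := cfm_sqrt_ge t
  unfold cfmU2
  refine ⟨by positivity, ?_⟩
  rw [div_le_one (by positivity)]
  exact one_le_pow₀ hs

/-- bounded truncation -/
noncomputable def cfmPhi (τ t : ℝ) : ℝ := cfmU t / (1 + τ * cfmU t)

/-- its derivative -/
noncomputable def cfmPhi1 (τ t : ℝ) : ℝ := cfmU1 t / (1 + τ * cfmU t) ^ 2

/-- second derivative -/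
noncomputable def cfmPhi2 (τ t : ℝ) : ℝ :=
  cfmU2 t / (1 + τ * cfmU t) ^ 2 - 2 * τ * cfmU1 t ^ 2 / (1 + τ * cfmU t) ^ 3

theorem cfm_den {τ : ℝ} (hτ : 0 < τ) (t : ℝ) : 1 < 1 + τ * cfmU t := by
  have := mul_pos hτ (cfmU_pos t); linarith

theorem cfm_den_deriv (τ t : ℝ) : HasDerivAt (fun t => 1 + τ * cfmU t) (τ * cfmU1 t) t :=
  ((cfmU_deriv t).const_mul τ).const_add 1

theorem cfmPhi_deriv {τ : ℝ} (hτ : 0 < τ) (t : ℝ) : HasDerivAt (cfmPhi τ) (cfmPhi1 τ t) t := by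
  have hd := cfm_den hτ t
  have := (cfmU_deriv t).div (cfm_den_deriv τ t) (by linarith)
  unfold cfmPhi cfmPhi1
  convert! this using 1
  congr 1
  ring

theorem cfmPhi1_deriv {τ : ℝ} (hτ : 0 < τ) (t : ℝ) : HasDerivAt (cfmPhi1 τ) (cfmPhi2 τ t) t := by
  have hd := cfm_den hτ t
  have hd0 : 1 + τ * cfmU t ≠ 0 := by linarith
  have := (cfmU1_deriv t).div ((cfm_den_deriv τ t).pow 2) (pow_ne_zero 2 hd0)
  unfold cfmPhi1 cfmPhi2
  convert! this using 1
  simp only [Pi.pow_apply]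
  field_simp
  simp
  ring

theorem cfmU_cont : Continuous cfmU := by unfold cfmU; fun_prop
theorem cfmU1_cont : Continuous cfmU1 := by
  unfold cfmU1
  refine continuous_const.add (continuous_id.div (by fun_prop) fun t => ?_)
  linarith [cfm_sqrt_ge t]
theorem cfmU2_cont : Continuous cfmU2 := by
  unfold cfmU2
  refine continuous_const.div (by fun_prop) fun t => pow_ne_zero 3 ?_
  linarith [cfm_sqrt_ge t]

theorem cfmPhi2_cont {τ : ℝ} (hτ : 0 < τ) : Continuous (cfmPhi2 τ) := by
  have := cfmU_cont
  have := cfmU1_cont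
  have := cfmU2_cont
  unfold cfmPhi2
  refine (Continuous.div (by fun_prop) (by fun_prop) fun t => ?_).sub
    (Continuous.div (by fun_prop) (by fun_prop) fun t => ?_)
  · exact pow_ne_zero _ (by linarith [cfm_den hτ t])
  · exact pow_ne_zero _ (by linarith [cfm_den hτ t])

theorem cfmPhi_cont {τ : ℝ} (hτ : 0 < τ) : Continuous (cfmPhi τ) :=
  continuous_iff_continuousAt.2 fun t => (cfmPhi_deriv hτ t).continuousAt

theorem cfmPhi1_cont {τ : ℝ} (hτ : 0 < τ) : Continuous (cfmPhi1 τ) :=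
  continuous_iff_continuousAt.2 fun t => (cfmPhi1_deriv hτ t).continuousAt

theorem cfmPhi_pos {τ : ℝ} (hτ : 0 < τ) (t : ℝ) : 0 < cfmPhi τ t :=
  div_pos (cfmU_pos t) (by linarith [cfm_den hτ t])

theorem cfmPhi_le {τ : ℝ} (hτ : 0 < τ) (t : ℝ) : cfmPhi τ t ≤ 1 / τ := by
  have := cfm_den hτ t
  unfold cfmPhi
  rw [div_le_div_iff₀ (by linarith) hτ]
  linarith

theorem cfmPhi_le_U {τ : ℝ} (hτ : 0 < τ) (t : ℝ) : cfmPhi τ t ≤ cfmU t :=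
  div_le_self (cfmU_pos t).le (cfm_den hτ t).le

theorem cfmPhi_ge {τ : ℝ} (hτ : 0 < τ) {t : ℝ} (ht : 0 ≤ t) : t / (1 + τ * t) ≤ cfmPhi τ t := by
  have h1 := cfm_den hτ t
  have h2 := mul_nonneg hτ.le ht
  unfold cfmPhi
  rw [div_le_div_iff₀ (by linarith) (by linarith)]
  nlinarith [cfmU_ge t]

theorem cfmPhi1_bd {τ : ℝ} (hτ : 0 < τ) (t : ℝ) : |cfmPhi1 τ t| ≤ 2 := by
  have h1 := cfm_den hτ t
  obtain ⟨h2, h3⟩ := cfmU1_bd t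
  have h4 : 1 ≤ (1 + τ * cfmU t) ^ 2 := one_le_pow₀ h1.le
  unfold cfmPhi1
  rw [abs_of_nonneg (by positivity)]
  exact (div_le_self h2 h4).trans h3

theorem cfmPhi2_bd {τ : ℝ} (hτ : 0 < τ) (t : ℝ) : - (8 * τ) ≤ cfmPhi2 τ t ∧ cfmPhi2 τ t ≤ 1 := by
  have h1 := cfm_den hτ t
  obtain ⟨h2, h3⟩ := cfmU1_bd t
  obtain ⟨h5, h6⟩ := cfmU2_bd t
  have h4 : 1 ≤ (1 + τ * cfmU t) ^ 2 := one_le_pow₀ h1.le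
  have h7 : 1 ≤ (1 + τ * cfmU t) ^ 3 := one_le_pow₀ h1.le
  have a1 : 0 ≤ cfmU2 t / (1 + τ * cfmU t) ^ 2 := by positivity
  have a2 : cfmU2 t / (1 + τ * cfmU t) ^ 2 ≤ 1 := (div_le_self h5 h4).trans h6
  have a3 : 0 ≤ 2 * τ * cfmU1 t ^ 2 / (1 + τ * cfmU t) ^ 3 := by positivity
  have a4 : 2 * τ * cfmU1 t ^ 2 / (1 + τ * cfmU t) ^ 3 ≤ 8 * τ := by
    refine (div_le_self (by positivity) h7).trans ?_
    nlinarith [mul_nonneg hτ.le (show 0 ≤ 4 - cfmU1 t ^ 2 by nlinarith)]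
  unfold cfmPhi2
  constructor <;> linarith

theorem cfm_ell_deriv {n : ℕ} (a : Fin n → ℝ) (b N : ℝ) (i : Fin n) (x : Fin n → ℝ) :
    HasLineDerivAt ℝ (fun x : Fin n → ℝ => N * (∑ k, a k * x k - b)) (N * a i) x
      (Pi.single i 1) := by
  have h := (((HasDerivAt.fun_sum (u := Finset.univ) fun k _ =>
    (HasDerivAt.const_mul (a k) (cfm_lineDeriv_coord i k x))).sub_const b).const_mul N)
  unfold HasLineDerivAt
  convert! h using 1
  simp

/-- the potential of finitely many half-spaces -/
noncomputable def cfmPot {n : ℕ} (a : ℕ → Fin n → ℝ) (b : ℕ → ℝ)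
    (ha : ∀ j, ∑ i, a j i ^ 2 = 1) (M : ℕ) (N τ : ℝ) (hN : 0 ≤ N) (hτ : 0 < τ) : CfmW n where
  W x := ∑ j ∈ Finset.range M, cfmPhi τ (N * (∑ k, a j k * x k - b j))
  W1 i x := ∑ j ∈ Finset.range M, cfmPhi1 τ (N * (∑ k, a j k * x k - b j)) * (N * a j i)
  W2 i i' x := ∑ j ∈ Finset.range M,
    cfmPhi2 τ (N * (∑ k, a j k * x k - b j)) * (N * a j i') * (N * a j i)
  B := M * (1 / τ + 2 * N + (1 + 8 * τ) * N * N)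
  η := M * (8 * τ * N ^ 2)
  cW := by have := cfmPhi_cont hτ; fun_prop
  cW1 := by have := cfmPhi1_cont hτ; fun_prop
  cW2 := by have := cfmPhi2_cont hτ; fun_prop
  bW x := by
    refine (Finset.abs_sum_le_sum_abs _ _).trans ?_
    calc _ ≤ ∑ _j ∈ Finset.range M, (1 / τ + 2 * N + (1 + 8 * τ) * N * N) := by
          refine Finset.sum_le_sum fun j _ => ?_
          rw [abs_of_pos (cfmPhi_pos hτ _)]
          refine (cfmPhi_le hτ _).trans ?_
          have : 0 ≤ 2 * N + (1 + 8 * τ) * N * N := by positivity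
          linarith
      _ = _ := by rw [Finset.sum_const, Finset.card_range, nsmul_eq_mul]
  bW1 i x := by
    refine (Finset.abs_sum_le_sum_abs _ _).trans ?_
    calc _ ≤ ∑ _j ∈ Finset.range M, (1 / τ + 2 * N + (1 + 8 * τ) * N * N) := by
          refine Finset.sum_le_sum fun j _ => ?_
          have hai : |a j i| ≤ 1 := by
            rw [← sq_le_one_iff_abs_le_one, ← ha j]
            exact Finset.single_le_sum (f := fun i => a j i ^ 2) (fun _ _ => sq_nonneg _)
              (Finset.mem_univ i)
          rw [abs_mul, abs_mul, abs_of_nonneg hN]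
          have h1 : |cfmPhi1 τ (N * (∑ k, a j k * x k - b j))| * (N * |a j i|) ≤ 2 * (N * 1) := by
            gcongr
            exact cfmPhi1_bd hτ _
          refine h1.trans ?_
          have : 0 ≤ 1 / τ + (1 + 8 * τ) * N * N := by positivity
          linarith
      _ = _ := by rw [Finset.sum_const, Finset.card_range, nsmul_eq_mul]
  bW2 i i' x := by
    refine (Finset.abs_sum_le_sum_abs _ _).trans ?_
    calc _ ≤ ∑ _j ∈ Finset.range M, (1 / τ + 2 * N + (1 + 8 * τ) * N * N) := by
          refine Finset.sum_le_sum fun j _ => ?_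
          have hai : ∀ i, |a j i| ≤ 1 := by
            intro i
            rw [← sq_le_one_iff_abs_le_one, ← ha j]
            exact Finset.single_le_sum (f := fun i => a j i ^ 2) (fun _ _ => sq_nonneg _)
              (Finset.mem_univ i)
          rw [abs_mul, abs_mul, abs_mul, abs_mul, abs_of_nonneg hN]
          have h1 : |cfmPhi2 τ (N * (∑ k, a j k * x k - b j))| * (N * |a j i'|) * (N * |a j i|)
              ≤ (1 + 8 * τ) * (N * 1) * (N * 1) := by
            have := cfmPhi2_bd hτ (N * (∑ k, a j k * x k - b j))
            gcongr
            · rw [abs_le]; constructor <;> linarith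
            · exact hai _
            · exact hai _
          refine h1.trans ?_
          have : 0 ≤ 1 / τ + 2 * N := by positivity
          linarith
      _ = _ := by rw [Finset.sum_const, Finset.card_range, nsmul_eq_mul]
  dW i x := by
    have := HasDerivAt.fun_sum (u := Finset.range M) fun j _ =>
      HasDerivAt.comp (0 : ℝ) (cfmPhi_deriv hτ _) (cfm_ell_deriv (a j) (b j) N i x)
    unfold HasLineDerivAt
    convert! this using 1
    simp
  dW1 i i' x := by
    have := HasDerivAt.fun_sum (u := Finset.range M) fun j _ =>
      (HasDerivAt.comp (0 : ℝ) (cfmPhi1_deriv hτ _)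
        (cfm_ell_deriv (a j) (b j) N i' x)).mul_const (N * a j i)
    unfold HasLineDerivAt
    convert! this using 1
    simp
  hess x v := by
    have e : ∑ i', ∑ i, (∑ j ∈ Finset.range M,
        cfmPhi2 τ (N * (∑ k, a j k * x k - b j)) * (N * a j i') * (N * a j i)) * v i * v i'
        = ∑ j ∈ Finset.range M, cfmPhi2 τ (N * (∑ k, a j k * x k - b j)) *
          (N ^ 2 * (∑ i, a j i * v i) ^ 2) := by
      simp only [Finset.sum_mul]
      rw [Finset.sum_congr rfl fun i' _ => Finset.sum_comm, Finset.sum_comm]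
      refine Finset.sum_congr rfl fun j _ => ?_
      rw [pow_two (∑ i, a j i * v i), Finset.sum_mul_sum, Finset.mul_sum, Finset.mul_sum]
      refine Finset.sum_congr rfl fun i' _ => ?_
      rw [Finset.mul_sum, Finset.mul_sum]
      exact Finset.sum_congr rfl fun i _ => by ring
    rw [e]
    calc _ = ∑ _j ∈ Finset.range M, - (8 * τ) * (N ^ 2 * ∑ i, v i ^ 2) := by simp; ring
      _ ≤ _ := by
        refine Finset.sum_le_sum fun j _ => ?_
        have h1 := (cfmPhi2_bd hτ (N * (∑ k, a j k * x k - b j))).1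
        have h2 := Finset.sum_mul_sq_le_sq_mul_sq Finset.univ (a j) v
        rw [ha j, one_mul] at h2
        have h3 : N ^ 2 * (∑ i, a j i * v i) ^ 2 ≤ N ^ 2 * ∑ i, v i ^ 2 := by gcongr
        have h4 : 0 ≤ N ^ 2 * (∑ i, a j i * v i) ^ 2 := by positivity
        nlinarith

/-- half-space description of a convex body -/
theorem cfm_halfspaces {n : ℕ} (hn : 0 < n) (K : Set (Fin n → ℝ)) (hKconv : Convex ℝ K)
    (hKc : IsCompact K) (hKne : K.Nonempty) :
    ∃ (a : ℕ → Fin n → ℝ) (b : ℕ → ℝ), (∀ j, ∑ i, a j i ^ 2 = 1) ∧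
      (∀ j, ∀ x ∈ K, ∑ i, a j i * x i ≤ b j) ∧ ∀ x, x ∉ K → ∃ j, b j < ∑ i, a j i * x i := by
  let I := {ab : (Fin n → ℝ) × ℝ // ∑ i, ab.1 i ^ 2 = 1 ∧ ∀ x ∈ K, ∑ i, ab.1 i * x i ≤ ab.2}
  let U : I → Set (Fin n → ℝ) := fun ab => {x | ab.1.2 < ∑ i, ab.1.1 i * x i}
  have hU : ∀ ab, IsOpen (U ab) := fun ab => isOpen_lt (by fun_prop) (by fun_prop)
  have hcov : ∀ x, x ∉ K → ∃ ab, x ∈ U ab := by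
    intro x hx
    obtain ⟨f, u, h1, h2⟩ := geometric_hahn_banach_closed_point hKconv hKc.isClosed hx
    let c : Fin n → ℝ := fun i => f (Pi.single i 1)
    have hL : ∀ x, f x = ∑ i, c i * x i := by
      intro x
      conv_lhs => rw [← Finset.univ_sum_single x]
      rw [map_sum]
      refine Finset.sum_congr rfl fun i _ => ?_
      have : (Pi.single i (x i) : Fin n → ℝ) = x i • Pi.single i 1 := by
        rw [← Pi.single_smul]; simp
      rw [this, map_smul, smul_eq_mul, mul_comm]
    have hpos : 0 < ∑ i, c i ^ 2 := by
      by_contra hcon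
      have h0 : ∑ i, c i ^ 2 = 0 := le_antisymm (not_lt.1 hcon) (by positivity)
      rw [Finset.sum_eq_zero_iff_of_nonneg (fun _ _ => sq_nonneg _)] at h0
      have hc0 : ∀ i, c i = 0 := fun i => by simpa using h0 i (Finset.mem_univ i)
      obtain ⟨k, hk⟩ := hKne
      have := h1 k hk
      rw [hL] at this h2
      simp [hc0] at this h2
      linarith
    have hR : 0 < √(∑ i, c i ^ 2) := Real.sqrt_pos.2 hpos
    have hs : ∀ y : Fin n → ℝ, ∑ i, c i / √(∑ i, c i ^ 2) * y i = f y / √(∑ i, c i ^ 2) := by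
      intro y
      rw [hL, Finset.sum_div]
      exact Finset.sum_congr rfl fun i _ => by ring
    refine ⟨⟨(fun i => c i / √(∑ i, c i ^ 2), u / √(∑ i, c i ^ 2)), ?_, ?_⟩, ?_⟩
    · simp only [div_pow]
      rw [← Finset.sum_div, Real.sq_sqrt hpos.le, div_self hpos.ne']
    · intro y hy
      simp only [hs]
      have := h1 y hy
      gcongr
    · simp only [U, Set.mem_ofPred_eq, hs]
      gcongr
  obtain ⟨T, hT, hTU⟩ := TopologicalSpace.isOpen_iUnion_countable U hU
  have hcov' : ∀ x, x ∉ K → ∃ ab ∈ T, x ∈ U ab := by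
    intro x hx
    have : x ∈ ⋃ i, U i := Set.mem_iUnion.2 (hcov x hx)
    rw [← hTU] at this
    simpa using this
  have : Nonempty (Fin n) := ⟨⟨0, hn⟩⟩
  have : NoncompactSpace (Fin n → ℝ) := NormedSpace.noncompactSpace ℝ _
  obtain ⟨x0, hx0⟩ := (Set.ne_univ_iff_exists_notMem K).1 hKc.ne_univ
  obtain ⟨i0, hi0, _⟩ := hcov' x0 hx0
  obtain ⟨g, hg⟩ := hT.exists_eq_range ⟨i0, hi0⟩
  refine ⟨fun j => (g j).1.1, fun j => (g j).1.2, fun j => (g j).2.1, fun j => (g j).2.2, ?_⟩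
  intro x hx
  obtain ⟨ab, hab, hxab⟩ := hcov' x hx
  rw [hg] at hab
  obtain ⟨j, rfl⟩ := hab
  exact ⟨j, hxab⟩

theorem cfm_interior_gap {n : ℕ} (K : Set (Fin n → ℝ)) (a : ℕ → Fin n → ℝ) (b : ℕ → ℝ)
    (ha : ∀ j, ∑ i, a j i ^ 2 = 1) (hb : ∀ j, ∀ x ∈ K, ∑ i, a j i * x i ≤ b j)
    (x : Fin n → ℝ) (hx : x ∈ interior K) : ∃ r > 0, ∀ j, ∑ i, a j i * x i - b j ≤ - r := by
  obtain ⟨δ, hδ, hball⟩ := Metric.mem_nhds_iff.1 (mem_interior_iff_mem_nhds.1 hx)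
  refine ⟨δ / 2, by positivity, fun j => ?_⟩
  have hai : ∀ i, |a j i| ≤ 1 := by
    intro i
    rw [← sq_le_one_iff_abs_le_one, ← ha j]
    exact Finset.single_le_sum (f := fun i => a j i ^ 2) (fun _ _ => sq_nonneg _)
      (Finset.mem_univ i)
  have hna : ‖a j‖ ≤ 1 := (pi_norm_le_iff_of_nonneg zero_le_one).2 hai
  have hy : x + (δ / 2) • a j ∈ K := by
    apply hball
    rw [Metric.mem_ball, dist_eq_norm, add_sub_cancel_left, norm_smul, Real.norm_eq_abs,
      abs_of_pos (by positivity)]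
    nlinarith
  have := hb j _ hy
  simp only [Pi.add_apply, Pi.smul_apply, smul_eq_mul, mul_add, Finset.sum_add_distrib] at this
  have e : ∑ i, a j i * (δ / 2 * a j i) = δ / 2 := by
    calc _ = ∑ i, δ / 2 * a j i ^ 2 := Finset.sum_congr rfl fun i _ => by ring
      _ = _ := by rw [← Finset.mul_sum, ha j, mul_one]
  rw [e] at this
  linarith

/-! ### Passing to the limit -/

/-- the approximating potentials -/
noncomputable def cfmSeq {n : ℕ} (a : ℕ → Fin n → ℝ) (b : ℕ → ℝ)
    (ha : ∀ j, ∑ i, a j i ^ 2 = 1) (m : ℕ) : CfmW n :=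
  cfmPot a b ha (m + 1) (((m : ℝ) + 1) ^ 2) (1 / ((m : ℝ) + 1) ^ 6) (by positivity) (by positivity)

theorem cfmSeq_eta {n : ℕ} (a : ℕ → Fin n → ℝ) (b : ℕ → ℝ)
    (ha : ∀ j, ∑ i, a j i ^ 2 = 1) (m : ℕ) : (cfmSeq a b ha m).η = 8 * (1 / ((m : ℝ) + 1)) := by
  simp only [cfmSeq, cfmPot]
  push_cast
  field_simp

theorem cfmSeq_W {n : ℕ} (a : ℕ → Fin n → ℝ) (b : ℕ → ℝ)
    (ha : ∀ j, ∑ i, a j i ^ 2 = 1) (m : ℕ) (x : Fin n → ℝ) :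
    (cfmSeq a b ha m).W x = ∑ j ∈ Finset.range (m + 1), cfmPhi (1 / ((m : ℝ) + 1) ^ 6)
      (((m : ℝ) + 1) ^ 2 * (∑ k, a j k * x k - b j)) := rfl

theorem cfmSeq_W_nonneg {n : ℕ} (a : ℕ → Fin n → ℝ) (b : ℕ → ℝ)
    (ha : ∀ j, ∑ i, a j i ^ 2 = 1) (m : ℕ) (x : Fin n → ℝ) : 0 ≤ (cfmSeq a b ha m).W x := by
  rw [cfmSeq_W]
  exact Finset.sum_nonneg fun _ _ => (cfmPhi_pos (by positivity) _).le

theorem cfmSeq_w_le {n : ℕ} (a : ℕ → Fin n → ℝ) (b : ℕ → ℝ)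
    (ha : ∀ j, ∑ i, a j i ^ 2 = 1) (m : ℕ) (x : Fin n → ℝ) : |(cfmSeq a b ha m).w x| ≤ 1 := by
  unfold CfmW.w
  rw [abs_of_pos (Real.exp_pos _), Real.exp_le_one_iff]
  linarith [cfmSeq_W_nonneg a b ha m x]

theorem cfmSeq_inside {n : ℕ} (a : ℕ → Fin n → ℝ) (b : ℕ → ℝ)
    (ha : ∀ j, ∑ i, a j i ^ 2 = 1) (x : Fin n → ℝ) {r : ℝ} (hr : 0 < r)
    (h : ∀ j, ∑ i, a j i * x i - b j ≤ - r) :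
    Filter.Tendsto (fun m => (cfmSeq a b ha m).w x) Filter.atTop (nhds 1) := by
  have h0 : Filter.Tendsto (fun m => (cfmSeq a b ha m).W x) Filter.atTop (nhds 0) := by
    have h1 : Filter.Tendsto (fun m : ℕ => (1 / r) * (1 / ((m : ℝ) + 1))) Filter.atTop (nhds 0) := by
      simpa using (tendsto_one_div_add_atTop_nhds_zero_nat (𝕜 := ℝ)).const_mul (1 / r)
    refine squeeze_zero (fun m => cfmSeq_W_nonneg a b ha m x) (fun m => ?_) h1
    calc (cfmSeq a b ha m).W x
        ≤ ∑ _j ∈ Finset.range (m + 1), 1 / (((m : ℝ) + 1) ^ 2 * r) := by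
          rw [cfmSeq_W]
          refine Finset.sum_le_sum fun j _ => ?_
          refine (cfmPhi_le_U (by positivity) _).trans (cfmU_le (by positivity) ?_)
          have := h j
          rw [← mul_neg]
          gcongr
      _ = _ := by
          rw [Finset.sum_const, Finset.card_range, nsmul_eq_mul]
          push_cast
          field_simp
  have := (Real.continuous_exp.tendsto _).comp h0.neg
  simpa [CfmW.w, Function.comp_def] using this

theorem cfmSeq_outside {n : ℕ} (a : ℕ → Fin n → ℝ) (b : ℕ → ℝ)
    (ha : ∀ j, ∑ i, a j i ^ 2 = 1) (x : Fin n → ℝ) (j : ℕ)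
    (h : b j < ∑ i, a j i * x i) :
    Filter.Tendsto (fun m => (cfmSeq a b ha m).w x) Filter.atTop (nhds 0) := by
  set l := ∑ i, a j i * x i - b j with hl
  have hl0 : 0 < l := by rw [hl]; linarith
  have h0 : Filter.Tendsto (fun m => (cfmSeq a b ha m).W x) Filter.atTop Filter.atTop := by
    have h1 : Filter.Tendsto (fun m : ℕ => (m : ℝ) * (l / (1 + l))) Filter.atTop Filter.atTop :=
      tendsto_natCast_atTop_atTop.atTop_mul_const (by positivity)
    refine Filter.tendsto_atTop_mono' _ ?_ h1
    filter_upwards [Filter.eventually_ge_atTop j] with m hm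
    have hM : (1 : ℝ) ≤ (m : ℝ) + 1 := by linarith [Nat.cast_nonneg (α := ℝ) m]
    have hMm : (m : ℝ) ≤ ((m : ℝ) + 1) ^ 2 := by nlinarith
    have e : (1 / ((m : ℝ) + 1) ^ 6) * (((m : ℝ) + 1) ^ 2 * l) ≤ l := by
      have : (1 / ((m : ℝ) + 1) ^ 6) * (((m : ℝ) + 1) ^ 2 * l) = l / ((m : ℝ) + 1) ^ 4 := by
        field_simp
      rw [this]
      exact div_le_self hl0.le (one_le_pow₀ hM)
    calc (m : ℝ) * (l / (1 + l)) ≤ ((m : ℝ) + 1) ^ 2 * (l / (1 + l)) := by gcongr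
      _ = ((m : ℝ) + 1) ^ 2 * l / (1 + l) := by ring
      _ ≤ ((m : ℝ) + 1) ^ 2 * l /
          (1 + (1 / ((m : ℝ) + 1) ^ 6) * (((m : ℝ) + 1) ^ 2 * l)) := by gcongr
      _ ≤ cfmPhi (1 / ((m : ℝ) + 1) ^ 6) (((m : ℝ) + 1) ^ 2 * l) :=
          cfmPhi_ge (by positivity) (by positivity)
      _ ≤ _ := Finset.single_le_sum
          (f := fun j => cfmPhi (1 / ((m : ℝ) + 1) ^ 6)
            (((m : ℝ) + 1) ^ 2 * (∑ k, a j k * x k - b j)))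
          (fun _ _ => (cfmPhi_pos (by positivity) _).le) (Finset.mem_range.2 (by omega))
  exact Real.tendsto_exp_neg_atTop_nhds_zero.comp h0

theorem cfm_limit {n : ℕ} (K : Set (Fin n → ℝ)) (hKconv : Convex ℝ K) (hKc : IsCompact K)
    (a : ℕ → Fin n → ℝ) (b : ℕ → ℝ) (ha : ∀ j, ∑ i, a j i ^ 2 = 1)
    (hb : ∀ j, ∀ x ∈ K, ∑ i, a j i * x i ≤ b j)
    (hb' : ∀ x, x ∉ K → ∃ j, b j < ∑ i, a j i * x i)
    (q : (Fin n → ℝ) → ℝ) (hq : Integrable q (cfmG n)) :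
    Filter.Tendsto (fun m => ∫ x, q x * (cfmSeq a b ha m).w x ∂(cfmG n)) Filter.atTop
      (nhds (∫ x in K, q x ∂(cfmG n))) := by
  rw [← integral_indicator hKc.measurableSet]
  refine tendsto_integral_of_dominated_convergence (fun x => |q x|) ?_ hq.abs ?_ ?_
  · intro m
    exact hq.1.mul (CfmW.c_w _).aestronglyMeasurable
  · intro m
    refine Filter.Eventually.of_forall fun x => ?_
    rw [norm_mul, Real.norm_eq_abs, Real.norm_eq_abs]
    exact mul_le_of_le_one_right (abs_nonneg _) (cfmSeq_w_le a b ha m x)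
  · have hfr : cfmG n (frontier K) = 0 := cfmG_ac n (hKconv.addHaar_frontier volume)
    have : ∀ᵐ x ∂(cfmG n), x ∉ frontier K := measure_eq_zero_iff_ae_notMem.1 hfr
    filter_upwards [this] with x hx
    by_cases hxK : x ∈ K
    · have hxInt : x ∈ interior K := by
        by_contra hcon
        exact hx ⟨subset_closure hxK, hcon⟩
      obtain ⟨r, hr, h⟩ := cfm_interior_gap K a b ha hb x hxInt
      rw [Set.indicator_of_mem hxK]
      simpa using (cfmSeq_inside a b ha x hr h).const_mul (q x)
    · obtain ⟨j, hj⟩ := hb' x hxK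
      rw [Set.indicator_of_notMem hxK]
      simpa using (cfmSeq_outside a b ha x j hj).const_mul (q x)

theorem cfmG_pos {n : ℕ} (K : Set (Fin n → ℝ)) (hKint : (interior K).Nonempty) :
    0 < (cfmG n K).toReal := by
  have : Measure.IsOpenPosMeasure (ProbabilityTheory.gaussianReal 0 1) :=
    (ProbabilityTheory.gaussianReal_absolutelyContinuous' 0 one_ne_zero).isOpenPosMeasure
  have : Measure.IsOpenPosMeasure (cfmG n) := by unfold cfmG; infer_instance
  rw [ENNReal.toReal_pos_iff]
  exact ⟨Measure.measure_pos_of_nonempty_interior _ hKint, measure_lt_top _ _⟩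

/-- CFM inequality: for the standard Gaussian `γ` and a convex body `K` with Gaussian
barycenter at the origin,
`∫_K |x|⁴ dγ − (1/γ(K))(∫_K |x|² dγ)² − 2∫_K |x|² dγ ≤ 0`. -/
theorem stmt_16 (n : ℕ) (K : Set (Fin n → ℝ))
    (hKconv : Convex ℝ K) (hKc : IsCompact K) (hKint : (interior K).Nonempty)
    (γ : Measure (Fin n → ℝ))
    (hγ : γ = Measure.pi fun _ : Fin n => ProbabilityTheory.gaussianReal 0 1)
    (hbary : ∀ i : Fin n, ∫ x in K, x i ∂γ = 0) :
    (∫ x in K, (∑ i, x i ^ 2) ^ 2 ∂γ)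
        - (1 / (γ K).toReal) * (∫ x in K, (∑ i, x i ^ 2) ∂γ) ^ 2
        - 2 * ∫ x in K, (∑ i, x i ^ 2) ∂γ ≤ 0 := by
  change γ = cfmG n at hγ
  subst hγ
  rcases Nat.eq_zero_or_pos n with rfl | hn
  · simp
  obtain ⟨a, b, ha, hb, hb'⟩ := cfm_halfspaces hn K hKconv hKc (hKint.mono interior_subset)
  have hZ := cfmG_pos K hKint
  have tx : ∀ i : Fin n, cfmTame (fun x : Fin n → ℝ => x i) := cfmTame_coord
  have tsq : cfmTame (fun x : Fin n → ℝ => ∑ i, x i ^ 2) := by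
    simp only [pow_two]
    exact cfmTame.sum fun i => (tx i).mul (tx i)
  have tq4 : cfmTame (fun x : Fin n → ℝ => (∑ i, x i ^ 2) ^ 2) := by
    have := tsq.mul tsq
    simpa only [← pow_two] using this
  have L4 := cfm_limit K hKconv hKc a b ha hb hb' _ tq4.integrable
  have L2 := cfm_limit K hKconv hKc a b ha hb hb' _ tsq.integrable
  have L1 := fun i => cfm_limit K hKconv hKc a b ha hb hb' _ (tx i).integrable
  have L0 := cfm_limit K hKconv hKc a b ha hb hb' (fun _ => 1) (integrable_const _)
  simp only [one_mul] at L0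
  have e0 : ∫ _x in K, (1 : ℝ) ∂(cfmG n) = (cfmG n K).toReal := by
    simp [Measure.real]
  rw [e0] at L0
  have Lη : Filter.Tendsto (fun m => 1 - (cfmSeq a b ha m).η) Filter.atTop (nhds 1) := by
    simp only [cfmSeq_eta]
    simpa using ((tendsto_one_div_add_atTop_nhds_zero_nat (𝕜 := ℝ)).const_mul 8).const_sub 1
  have lhs := L4.sub ((L2.pow 2).div L0 hZ.ne')
  have rhs := ((L2.const_mul 4).div (Lη.const_mul 2) (by norm_num)).add
    ((tendsto_finsetSum Finset.univ fun i _ => ((L1 i).const_mul 2).pow 2).div (Lη.mul L0)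
      (by simpa using hZ.ne'))
  have key := le_of_tendsto_of_tendsto lhs rhs (by
    filter_upwards [Lη.eventually (lt_mem_nhds one_pos)] with m hm
    exact (cfmSeq a b ha m).weighted (by linarith))
  simp only [hbary] at key
  have e1 : 1 / (cfmG n K).toReal * (∫ x in K, (∑ i, x i ^ 2) ∂(cfmG n)) ^ 2
      = (∫ x in K, (∑ i, x i ^ 2) ∂(cfmG n)) ^ 2 / (cfmG n K).toReal := by ring
  rw [e1]
  simp at key
  linarith
end
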